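/- arXiv:1911.09921 — 2 statements merged into one kernel-verified Lean document; each statement's English description precedes it below -/
import Mathlib

section
/- Let D be a domain in ℂⁿ admitting a psh peak function for a point p ∈ ∂D, and let U be a bounded open neighborhood of p. Then lim_{z→p} K_D(z;X)/K_{D∩U}(z;X) = 1 uniformly in X ∈ ℂⁿ∖{0}; that is, for every ε > 0 there is a neighborhood W of p such that (1−ε) K_{D∩U}(z;X) ≤ K_D(z;X) ≤ K_{D∩U}(z;X) for all z ∈ D ∩ W and all X ∈ ℂⁿ. -/
open Set Metric Filter Topology
open scoped Classical

noncomputable section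

/-- `ℂⁿ` with the Euclidean norm. -/
abbrev Cn (n : ℕ) := EuclideanSpace ℂ (Fin n)

/-- A function `u : ℂⁿ → [-∞,∞)` (with values in `EReal`) is plurisubharmonic on `D` if it
is upper semicontinuous on `D` and satisfies the sub-mean-value inequality on every closed
disc in a complex line contained in `D` (stated via continuous majorants on the boundary
circle, so as to handle the value `-∞`). -/
def PSHOn {n : ℕ} (u : Cn n → EReal) (D : Set (Cn n)) : Prop :=
  UpperSemicontinuousOn u D ∧
  ∀ a ∈ D, ∀ b : Cn n, ∀ r : ℝ, 0 < r →
    (∀ t : ℂ, ‖t‖ ≤ r → a + t • b ∈ D) →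
    ∀ g : ℝ → ℝ, Continuous g →
      (∀ θ : ℝ, u (a + ((r : ℂ) * Complex.exp (θ * Complex.I)) • b) ≤ (g θ : EReal)) →
      u a ≤ (((1 / (2 * Real.pi)) * ∫ θ in (0:ℝ)..(2 * Real.pi), g θ : ℝ) : EReal)

/-- `φ` is a plurisubharmonic peak function for `D` at the boundary point `p`:
`φ` is psh on `D`, `φ(z) → 0` as `z → p` in `D`, and `sup_{D∖U} φ < 0` for every
neighborhood `U` of `p`. -/
def IsPshPeakFn {n : ℕ} (D : Set (Cn n)) (p : Cn n) (φ : Cn n → EReal) : Prop :=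
  PSHOn φ D ∧ Tendsto φ (𝓝[D] p) (𝓝 (0 : EReal)) ∧
  ∀ U ∈ 𝓝 p, ∃ c : ℝ, c < 0 ∧ ∀ z ∈ D \ U, φ z ≤ (c : EReal)

/-- The Kobayashi metric of `D`:
`K_D(z;X) = inf {|α| : ∃ f : 𝔻 → D holomorphic, f 0 = z, α • f' 0 = X}`. -/
def kobayashi {n : ℕ} (D : Set (Cn n)) (z X : Cn n) : ℝ :=
  sInf {c : ℝ | ∃ α : ℂ, c = ‖α‖ ∧ ∃ f : ℂ → Cn n,
    DifferentiableOn ℂ f (ball (0:ℂ) 1) ∧ MapsTo f (ball (0:ℂ) 1) D ∧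
    f 0 = z ∧ α • deriv f 0 = X}

/-!
A holomorphic disc `f` in `D` starting near `p` cannot leave a small ball around `p` before the
radius comes close to `1`; rescaling it slightly then gives a disc in `D ∩ U`. To see this, bound
the truncated peak function `v` along `f`. If `f` leaves the ball at some `‖ζ‖ ≤ r`, the maximum
principle yields on every circle of radius `s ∈ [r, 1)` a point where `v ∘ f` is at most a fixed
`-c < 0`. Choose `N` such points, on equally spaced circles, as poles of a Green potential of the
disc. At distance `≳ 1 / N` from the poles the potential is at most a constant times `N`, because a
Riemann sum of `log` is controlled by its integral, while at the origin it is at least a constant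
times `N`. Comparing `v ∘ f` with a negative multiple of the potential bounds `v (f 0)` away from
`0`; the number `N` depends on the modulus of continuity of `f`, but it cancels in this bound. This
contradicts `v (f 0) → 0` as `f 0 → p`.

The comparison needs `v ∘ f` to be subharmonic, whereas plurisubharmonicity only controls affine
discs. This is obtained by doubling variables: maximise `v x - h ζ - k ‖x - f ζ‖ ^ 2` over
independent `x` and `ζ`, and test with the affine disc through `x` in the direction `f' ζ`.
-/

section CircleAverage

open Real

variable {E : Type*} [NormedAddCommGroup E] [InnerProductSpace ℂ E] {g : ℂ → E} {c : ℂ} {r : ℝ}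

lemma circleAverage_re_inner_sub_center (hg : DiffContOnCl ℂ g (ball c r)) (hr : 0 < r) (a : E) :
    circleAverage (fun w ↦ (inner ℂ a (g w - g c)).re) c r = 0 := by
  have hdiff : DiffContOnCl ℂ (fun w ↦ inner ℂ a (g w - g c)) (ball c |r|) := by
    rw [abs_of_pos hr]
    exact (innerSL ℂ a).differentiable.comp_diffContOnCl (hg.sub_const (g c))
  have hint : CircleIntegrable (fun w ↦ inner ℂ a (g w - g c)) c r := by
    refine ContinuousOn.circleIntegrable' (hdiff.continuousOn_ball.mono ?_)
    exact sphere_subset_closedBall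
  calc circleAverage (fun w ↦ (inner ℂ a (g w - g c)).re) c r
      = (circleAverage (fun w ↦ inner ℂ a (g w - g c)) c r).re :=
        Complex.reCLM.circleAverage_comp_comm hint
    _ = 0 := by rw [hdiff.circleAverage, sub_self, inner_zero_right, Complex.zero_re]

lemma circleAverage_norm_sq (hg : DiffContOnCl ℂ g (ball c r)) (hr : 0 < r) :
    circleAverage (fun w ↦ ‖g w‖ ^ 2) c r
      = ‖g c‖ ^ 2 + circleAverage (fun w ↦ ‖g w - g c‖ ^ 2) c r := by
  have hgc : ContinuousOn g (sphere c |r|) := by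
    rw [abs_of_pos hr]
    exact hg.continuousOn_ball.mono sphere_subset_closedBall
  have hexpand : (fun w ↦ ‖g w‖ ^ 2) =
      fun w ↦ (‖g c‖ ^ 2 + (2 : ℝ) • (inner ℂ (g c) (g w - g c)).re) + ‖g w - g c‖ ^ 2 := by
    funext w
    have hadd := norm_add_sq (𝕜 := ℂ) (g c) (g w - g c)
    rwa [add_sub_cancel] at hadd
  have hinner : CircleIntegrable (fun w ↦ (2 : ℝ) • (inner ℂ (g c) (g w - g c)).re) c r :=
    (Complex.continuous_re.comp_continuousOn
      (continuousOn_const.inner (hgc.sub continuousOn_const))).circleIntegrable'.const_smul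
  have haffine : CircleIntegrable
      (fun w ↦ ‖g c‖ ^ 2 + (2 : ℝ) • (inner ℂ (g c) (g w - g c)).re) c r :=
    (circleIntegrable_const _ c r).add hinner
  have hsq : CircleIntegrable (fun w ↦ ‖g w - g c‖ ^ 2) c r :=
    ContinuousOn.circleIntegrable' (by fun_prop)
  rw [hexpand, circleAverage_fun_add haffine hsq,
    circleAverage_fun_add (circleIntegrable_const _ c r) hinner, circleAverage_const,
    circleAverage_fun_smul, circleAverage_re_inner_sub_center hg hr, smul_zero, add_zero]

lemma circleAverage_norm_sq_self (c : ℂ) (hr : 0 < r) :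
    circleAverage (fun w : ℂ ↦ ‖w‖ ^ 2) c r = ‖c‖ ^ 2 + r ^ 2 := by
  rw [circleAverage_norm_sq (g := fun w ↦ w) differentiable_id.diffContOnCl hr]
  congr 1
  refine circleAverage_const_on_circle fun w hw ↦ ?_
  rw [← dist_eq_norm, mem_sphere.1 hw, sq_abs]

lemma eventually_circleAverage_norm_sq_le [CompleteSpace E] (hg : AnalyticAt ℂ g c)
    (hg' : deriv g c = 0) {η : ℝ} (hη : 0 < η) :
    ∀ᶠ s in 𝓝[>] (0 : ℝ), circleAverage (fun w ↦ ‖g w‖ ^ 2) c s ≤ ‖g c‖ ^ 2 + η * s ^ 2 := by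
  have hsmall : ∀ᶠ w in 𝓝 c, ‖g w - g c‖ ≤ √η * ‖w - c‖ := by
    have hderiv := hg.differentiableAt.hasDerivAt.isLittleO
    simpa only [hg', smul_zero, sub_zero] using hderiv.bound (sqrt_pos.2 hη)
  have hnhds := hg.eventually_analyticAt.and hsmall
  filter_upwards [nhdsWithin_le_nhds (eventually_closedBall_subset hnhds), self_mem_nhdsWithin]
    with s hs hs0
  have hdiff : DiffContOnCl ℂ g (ball c s) := by
    refine DifferentiableOn.diffContOnCl fun w hw ↦ ?_
    exact (hs (closure_ball_subset_closedBall hw)).1.differentiableAt.differentiableWithinAt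
  have hcont : ContinuousOn g (sphere c |s|) := by
    rw [abs_of_pos hs0]
    exact hdiff.continuousOn_ball.mono sphere_subset_closedBall
  rw [circleAverage_norm_sq hdiff hs0]
  gcongr
  refine circleAverage_mono_on_of_le_circle
    (ContinuousOn.circleIntegrable' (by fun_prop)) fun w hw ↦ ?_
  rw [abs_of_pos hs0] at hw
  calc ‖g w - g c‖ ^ 2 ≤ (√η * ‖w - c‖) ^ 2 := by
        gcongr
        exact (hs (sphere_subset_closedBall hw)).2
    _ = η * s ^ 2 := by rw [mul_pow, sq_sqrt hη.le, mem_sphere_iff_norm.1 hw]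

/-- `h` strictly exceeds its circle averages at `ζ`, by at least a fixed multiple of the squared
radius; for smooth `h` this is `Δ h ζ < 0`. -/
def StrictSuperMeanAt (h : ℂ → ℝ) (ζ : ℂ) : Prop :=
  ∃ η : ℝ, 0 < η ∧ ∀ᶠ s in 𝓝[>] (0 : ℝ), circleAverage h ζ s ≤ h ζ - η * s ^ 2

lemma strictSuperMeanAt_harmonic_add {h : ℂ → ℝ} {ζ : ℂ}
    (hh : InnerProductSpace.HarmonicAt h ζ) {η : ℝ} (hη : 0 < η) (C : ℝ) :
    StrictSuperMeanAt (fun w ↦ h w + η * (C - ‖w‖ ^ 2)) ζ := by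
  refine ⟨η, hη, ?_⟩
  filter_upwards [nhdsWithin_le_nhds (eventually_closedBall_subset hh.eventually),
    self_mem_nhdsWithin] with s hs hs0
  have hharm : InnerProductSpace.HarmonicOnNhd h (closedBall ζ |s|) := by
    rwa [abs_of_pos hs0]
  have hint : CircleIntegrable h ζ s :=
    (hharm.continuousOn.mono sphere_subset_closedBall).circleIntegrable'
  have hsq : CircleIntegrable (fun w : ℂ ↦ ‖w‖ ^ 2) ζ s :=
    ContinuousOn.circleIntegrable' (by fun_prop)
  have hC : CircleIntegrable (fun _ : ℂ ↦ C) ζ s := circleIntegrable_const C ζ s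
  have hquad : circleAverage (fun w : ℂ ↦ η • (C - ‖w‖ ^ 2)) ζ s =
      η • (C - (‖ζ‖ ^ 2 + s ^ 2)) := by
    rw [circleAverage_fun_smul, circleAverage_fun_sub hC hsq, circleAverage_const,
      circleAverage_norm_sq_self ζ hs0]
  have hquad_int : CircleIntegrable (fun w : ℂ ↦ η • (C - ‖w‖ ^ 2)) ζ s :=
    (hC.sub hsq).const_smul
  simp only [← smul_eq_mul η]
  rw [circleAverage_fun_add hint hquad_int, hquad, hharm.circleAverage_eq, smul_eq_mul,
    smul_eq_mul, smul_eq_mul]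
  linarith

lemma StrictSuperMeanAt.add_mul_norm_sq [CompleteSpace E] {h : ℂ → ℝ}
    (hsuper : StrictSuperMeanAt h c) (hh : ∀ᶠ w in 𝓝 c, ContinuousAt h w) (hg : AnalyticAt ℂ g c)
    (hg' : deriv g c = 0) {k : ℝ} (hk : 0 ≤ k) :
    StrictSuperMeanAt (fun w ↦ h w + k * ‖g w‖ ^ 2) c := by
  obtain ⟨η, hη, hdefect⟩ := hsuper
  have hsmall : k * (η / (k + 1)) < η := by
    rw [mul_div_left_comm]
    exact mul_lt_of_lt_one_right hη ((div_lt_one (by positivity)).2 (lt_add_one k))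
  refine ⟨η - k * (η / (k + 1)), sub_pos.2 hsmall, ?_⟩
  have hη' : 0 < η / (k + 1) := by positivity
  have hcont := hh.and hg.eventually_analyticAt
  filter_upwards [hdefect, eventually_circleAverage_norm_sq_le hg hg' hη',
    nhdsWithin_le_nhds (eventually_closedBall_subset hcont), self_mem_nhdsWithin]
    with s hhs hgs hs hs0
  have hsphere : sphere c |s| ⊆ closedBall c s := by
    rw [abs_of_pos hs0]
    exact sphere_subset_closedBall
  have hh_int : CircleIntegrable h c s := ContinuousOn.circleIntegrable' fun w hw ↦
    (hs (hsphere hw)).1.continuousWithinAt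
  have hg_int : CircleIntegrable (fun w ↦ k • ‖g w‖ ^ 2) c s := ContinuousOn.circleIntegrable'
    fun w hw ↦ ((hs (hsphere hw)).2.continuousAt.norm.pow 2).const_smul k |>.continuousWithinAt
  calc circleAverage (fun w ↦ h w + k • ‖g w‖ ^ 2) c s
      = circleAverage h c s + k * circleAverage (fun w ↦ ‖g w‖ ^ 2) c s := by
        rw [circleAverage_fun_add hh_int hg_int, circleAverage_fun_smul, smul_eq_mul]
    _ ≤ (h c - η * s ^ 2) + k * (‖g c‖ ^ 2 + η / (k + 1) * s ^ 2) := by gcongr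
    _ = h c + k * ‖g c‖ ^ 2 - (η - k * (η / (k + 1))) * s ^ 2 := by ring

end CircleAverage

lemma exists_penalized_isMaxOn {X : Type*} [TopologicalSpace X] {K : Set X} (hK : IsCompact K)
    {F d : X → ℝ} (hF : UpperSemicontinuousOn F K) (hd : ContinuousOn d K)
    (hd_nonneg : ∀ q ∈ K, 0 ≤ d q) {q₀ : X} (hq₀ : q₀ ∈ K) (hdq₀ : d q₀ = 0) :
    ∃ q ∈ K, d q = 0 ∧ F q₀ ≤ F q ∧
      ∀ O ∈ 𝓝 q, ∃ k : ℕ, ∃ x ∈ K ∩ O, IsMaxOn (fun y ↦ F y - k * d y) K x := by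
  have hmax (k : ℕ) : ∃ x ∈ K, IsMaxOn (fun y ↦ F y - k * d y) K x := by
    have hpen : ContinuousOn (fun y ↦ -(k * d y)) K := (continuousOn_const.mul hd).neg
    simpa only [sub_eq_add_neg] using
      (hF.add hpen.upperSemicontinuousOn).exists_isMaxOn ⟨q₀, hq₀⟩ hK
  choose x hxK hx using hmax
  have hpenalty (k : ℕ) : F q₀ ≤ F (x k) - k * d (x k) := by
    simpa only [hdq₀, mul_zero, sub_zero] using isMaxOn_iff.1 (hx k) q₀ hq₀
  obtain ⟨M, hM⟩ := hF.bddAbove_of_isCompact hK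
  obtain ⟨q, hqK, hq⟩ := hK.exists_mapClusterPt (u := x) (f := atTop)
    (tendsto_principal.2 (.of_forall hxK))
  have hfreq {P : X → Prop} (hP : ∀ᶠ y in 𝓝[K] q, P y) : ∃ᶠ k in atTop, P (x k) :=
    (hq.frequently (eventually_nhdsWithin_iff.1 hP)).mono fun k hk ↦ hk (hxK k)
  refine ⟨q, hqK, ?_, ?_, fun O hO ↦ ?_⟩
  · by_contra hdq
    have hdq_pos : 0 < d q := (hd_nonneg q hqK).lt_of_ne' hdq
    have hlarge := hfreq ((hd q hqK).eventually_const_lt (half_lt_self hdq_pos))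
    have hdiv : ∀ᶠ k : ℕ in atTop, M - F q₀ < k * (d q / 2) :=
      (tendsto_natCast_atTop_atTop.atTop_mul_const (half_pos hdq_pos)).eventually_gt_atTop _
    obtain ⟨k, hk, hkM⟩ := (hlarge.and_eventually hdiv).exists
    have hbound : F (x k) ≤ M := hM (mem_image_of_mem F (hxK k))
    have := mul_le_mul_of_nonneg_left hk.le (Nat.cast_nonneg k)
    linarith [hpenalty k]
  · by_contra! hlt
    obtain ⟨k, hk⟩ := (hfreq (hF q hqK _ hlt)).exists
    linarith [hpenalty k, mul_nonneg (Nat.cast_nonneg k) (hd_nonneg _ (hxK k))]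
  · obtain ⟨k, hk⟩ := (hfreq (nhdsWithin_le_nhds hO)).exists
    exact ⟨k, x k, ⟨hxK k, hk⟩, hx k⟩

section Comparison

open Real InnerProductSpace

variable {E : Type*} [NormedAddCommGroup E] [InnerProductSpace ℂ E] {v : E → ℝ} {D : Set E}
  {f : ℂ → E} {h : ℂ → ℝ}

/-- Real-valued plurisubharmonicity on `D`. As in `PSHOn`, the sub-mean-value inequality is tested
on continuous majorants along the boundary circle, so that no measurability of `v` is needed. -/
structure RealPSHOn (v : E → ℝ) (D : Set E) : Prop where
  usc : UpperSemicontinuousOn v D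
  sub_mean : ∀ a ∈ D, ∀ b : E, ∀ c : ℂ, ∀ r : ℝ, 0 < r →
    (∀ t ∈ closedBall c r, a + (t - c) • b ∈ D) →
    ∀ G : ℂ → ℝ, ContinuousOn G (sphere c r) →
      (∀ t ∈ sphere c r, v (a + (t - c) • b) ≤ G t) → v a ≤ circleAverage G c r

lemma RealPSHOn.not_eventually_sub_le (hv : RealPSHOn v D) {x : E} (hx : D ∈ 𝓝 x) (b : E) {ζ : ℂ}
    (hh : ∀ᶠ w in 𝓝 ζ, ContinuousAt h w) (hsuper : StrictSuperMeanAt h ζ) :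
    ¬ ∀ᶠ w in 𝓝 ζ, v (x + (w - ζ) • b) - v x ≤ h w - h ζ := by
  intro hle
  obtain ⟨η, hη, hdefect⟩ := hsuper
  have hD : ∀ᶠ w in 𝓝 ζ, x + (w - ζ) • b ∈ D := by
    have hdisc : Continuous fun w ↦ x + (w - ζ) • b := by fun_prop
    exact hdisc.continuousAt.eventually_mem (by simpa using hx)
  have hball : ∀ᶠ s in 𝓝[>] (0 : ℝ), closedBall ζ s ⊆ {w | x + (w - ζ) • b ∈ D ∧
      v (x + (w - ζ) • b) - v x ≤ h w - h ζ ∧ ContinuousAt h w} :=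
    nhdsWithin_le_nhds (eventually_closedBall_subset (hD.and (hle.and hh)))
  obtain ⟨s, hs, hdefect_s, hs0 : 0 < s⟩ := (hball.and (hdefect.and self_mem_nhdsWithin)).exists
  have hh_cont : ContinuousOn h (sphere ζ s) := fun w hw ↦
    (hs (sphere_subset_closedBall hw)).2.2.continuousWithinAt
  have hlt : v x < v x := calc
    v x ≤ circleAverage (fun w ↦ v x - h ζ + h w) ζ s := by
        refine hv.sub_mean x (mem_of_mem_nhds hx) b ζ s hs0 (fun w hw ↦ (hs hw).1) _
          (hh_cont.const_add _) fun w hw ↦ ?_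
        linarith [(hs (sphere_subset_closedBall hw)).2.1]
    _ = v x - h ζ + circleAverage h ζ s := by
        rw [circleAverage_fun_add (circleIntegrable_const _ _ _) (hh_cont.circleIntegrable hs0.le),
          circleAverage_const]
    _ < v x := by
        have : 0 < η * s ^ 2 := by positivity
        linarith
  exact hlt.false

-- Compare along the affine disc `w ↦ x + (w - ζ) • deriv f ζ`: its gap to `f` is stationary at
-- `ζ`, so the penalty term cannot compensate the strict defect of `h`.
lemma RealPSHOn.not_isLocalMax_sub [CompleteSpace E] (hv : RealPSHOn v D) {x : E} (hx : D ∈ 𝓝 x)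
    {ζ : ℂ} (hf : AnalyticAt ℂ f ζ) (hh : ∀ᶠ w in 𝓝 ζ, ContinuousAt h w)
    (hsuper : StrictSuperMeanAt h ζ) {k : ℝ} (hk : 0 ≤ k) :
    ¬ IsLocalMax (fun q : E × ℂ ↦ v q.1 - h q.2 - k * ‖q.1 - f q.2‖ ^ 2) (x, ζ) := by
  intro hmax
  let disc : ℂ → E := fun w ↦ x + (w - ζ) • deriv f ζ
  have hdisc_center : disc ζ = x := by simp [disc]
  have hdisc : HasDerivAt disc (deriv f ζ) ζ := by
    have hline := ((hasDerivAt_id ζ).sub_const ζ).smul_const (deriv f ζ)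
    rw [one_smul] at hline
    exact hline.const_add x
  have hdisc_tendsto : Tendsto disc (𝓝 ζ) (𝓝 x) := by
    simpa only [hdisc_center] using hdisc.continuousAt.tendsto
  have hgap : AnalyticAt ℂ (fun w ↦ disc w - f w) ζ := by fun_prop
  have hgap_deriv : deriv (fun w ↦ disc w - f w) ζ = 0 :=
    (hdisc.sub hf.differentiableAt.hasDerivAt).deriv.trans (sub_self _)
  refine hv.not_eventually_sub_le hx (deriv f ζ) ?_
    (hsuper.add_mul_norm_sq hh hgap hgap_deriv hk) ?_
  · filter_upwards [hh, hgap.eventually_analyticAt] with w hhw hgw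
    exact hhw.add ((hgw.continuousAt.norm.pow 2).const_mul k)
  · filter_upwards [(hdisc_tendsto.prodMk_nhds tendsto_id).eventually hmax] with w hw
    simp only [id_eq] at hw
    rw [hdisc_center]
    linarith

lemma RealPSHOn.comp_le_of_strict [ProperSpace E] (hv : RealPSHOn v D) (hD : IsOpen D) {A : Set ℂ}
    (hA : IsCompact A) (hf : AnalyticOnNhd ℂ f A) (hfD : MapsTo f A D) (hh : ContinuousOn h A)
    (hsuper : ∀ ζ ∈ interior A, StrictSuperMeanAt h ζ)
    (hbdry : ∀ ζ ∈ frontier A, v (f ζ) ≤ h ζ) :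
    ∀ ζ ∈ A, v (f ζ) ≤ h ζ := by
  intro ζ₀ hζ₀
  obtain ⟨L, hL, hfL, hLD⟩ :=
    exists_compact_between (hA.image_of_continuousOn hf.continuousOn) hD hfD.image_subset
  by_contra! hlt
  let F : E × ℂ → ℝ := fun q ↦ v q.1 - h q.2
  have hF : UpperSemicontinuousOn F (L ×ˢ A) := by
    have hvL : UpperSemicontinuousOn (fun q : E × ℂ ↦ v q.1) (L ×ˢ A) :=
      (hv.usc.mono hLD).comp continuousOn_fst fun q hq ↦ hq.1
    have hhA : ContinuousOn (fun q : E × ℂ ↦ -h q.2) (L ×ˢ A) :=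
      (hh.comp continuousOn_snd fun q hq ↦ hq.2).neg
    simpa only [F, sub_eq_add_neg] using hvL.add hhA.upperSemicontinuousOn
  have hfA : ContinuousOn (fun q : E × ℂ ↦ f q.2) (L ×ˢ A) :=
    hf.continuousOn.comp continuousOn_snd fun q hq ↦ hq.2
  have hd : ContinuousOn (fun q : E × ℂ ↦ ‖q.1 - f q.2‖ ^ 2) (L ×ˢ A) :=
    (continuousOn_fst.sub hfA).norm.pow 2
  obtain ⟨⟨y, ζ⟩, hq, hd_zero, hF_le, hlocal⟩ := exists_penalized_isMaxOn (hL.prod hA) hF hd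
    (fun q _ ↦ by positivity) (q₀ := (f ζ₀, ζ₀))
    ⟨interior_subset (hfL (mem_image_of_mem f hζ₀)), hζ₀⟩ (by simp)
  obtain rfl : y = f ζ := by simpa [sub_eq_zero] using hd_zero
  have hζ : ζ ∈ interior A := by
    by_contra hζ
    have := hbdry ζ ⟨subset_closure hq.2, hζ⟩
    simp only [F] at hF_le
    linarith
  obtain ⟨k, ⟨x, w⟩, ⟨-, hx, hw⟩, hmax⟩ := hlocal (interior L ×ˢ interior A)
    (prod_mem_nhds (isOpen_interior.mem_nhds (hfL (mem_image_of_mem f hq.2)))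
      (isOpen_interior.mem_nhds hζ))
  refine hv.not_isLocalMax_sub (mem_of_superset (isOpen_interior.mem_nhds hx)
    (interior_subset.trans hLD)) (hf w (interior_subset hw)) ?_ (hsuper w hw) (Nat.cast_nonneg k)
    (hmax.isLocalMax (prod_mem_nhds (mem_interior_iff_mem_nhds.1 hx)
      (mem_interior_iff_mem_nhds.1 hw)))
  filter_upwards [isOpen_interior.mem_nhds hw] with t ht
  exact hh.continuousAt (mem_interior_iff_mem_nhds.1 ht)

-- A multiple of `C - ‖ζ‖ ^ 2 ≥ 0` makes the majorant strictly superharmonic.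
lemma RealPSHOn.comp_le_of_harmonic [ProperSpace E] (hv : RealPSHOn v D) (hD : IsOpen D)
    {A : Set ℂ} (hA : IsCompact A) (hf : AnalyticOnNhd ℂ f A) (hfD : MapsTo f A D)
    (hh : ContinuousOn h A) (hharm : HarmonicOnNhd h (interior A))
    (hbdry : ∀ ζ ∈ frontier A, v (f ζ) ≤ h ζ) :
    ∀ ζ ∈ A, v (f ζ) ≤ h ζ := by
  intro ζ hζ
  obtain ⟨C, hC⟩ := hA.bddAbove_image (f := fun ζ : ℂ ↦ ‖ζ‖ ^ 2) (by fun_prop)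
  have hC_nonneg {w : ℂ} (hw : w ∈ A) : 0 ≤ C - ‖w‖ ^ 2 := sub_nonneg.2 (hC (mem_image_of_mem _ hw))
  have hperturbed : ∀ᶠ η in 𝓝[>] (0 : ℝ), v (f ζ) ≤ h ζ + η * (C - ‖ζ‖ ^ 2) := by
    filter_upwards [self_mem_nhdsWithin] with η (hη : 0 < η)
    refine hv.comp_le_of_strict hD hA hf hfD (h := fun w ↦ h w + η * (C - ‖w‖ ^ 2)) (by fun_prop)
      (fun w hw ↦ strictSuperMeanAt_harmonic_add (hharm w hw) hη C) (fun w hw ↦ ?_) ζ hζ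
    have := mul_nonneg hη.le (hC_nonneg (hA.isClosed.frontier_subset hw))
    linarith [hbdry w hw]
  have hlim : Tendsto (fun η : ℝ ↦ h ζ + η * (C - ‖ζ‖ ^ 2)) (𝓝[>] 0) (𝓝 (h ζ)) := by
    refine Tendsto.mono_left ?_ nhdsWithin_le_nhds
    have hcont : Continuous fun η : ℝ ↦ h ζ + η * (C - ‖ζ‖ ^ 2) := by fun_prop
    simpa using hcont.tendsto 0
  exact ge_of_tendsto hlim hperturbed

end Comparison

section GreenPotential

open Real InnerProductSpace

lemma intervalIntegrable_log_sub (ρ x y : ℝ) :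
    IntervalIntegrable (fun t ↦ log (ρ - t)) MeasureTheory.volume x y := by
  simpa only [sub_sub_cancel] using
    (intervalIntegral.intervalIntegrable_log' (a := ρ - x) (b := ρ - y)).comp_sub_left ρ

lemma integral_log_sub_le {ρ x y b : ℝ} (hxy : x ≤ y) (hb : ∀ t ∈ Icc x y, |ρ - t| ≤ b) :
    ∫ t in x..y, log (ρ - t) ≤ (y - x) * log b := by
  calc ∫ t in x..y, log (ρ - t) ≤ ∫ _ in x..y, log b := by
        refine intervalIntegral.integral_mono_ae_restrict hxy (intervalIntegrable_log_sub ρ x y)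
          intervalIntegrable_const ?_
        filter_upwards [MeasureTheory.ae_restrict_mem measurableSet_Icc,
          MeasureTheory.ae_restrict_of_ae (MeasureTheory.volume.ae_ne ρ)] with t ht htρ
        rw [← log_abs]
        exact log_le_log (abs_pos.2 (sub_ne_zero.2 htρ.symm)) (hb t ht)
    _ = (y - x) * log b := by rw [intervalIntegral.integral_const, smul_eq_mul]

lemma integral_log_sub_le_mul_sum {d : ℝ} (hd : 0 ≤ d) (s ρ : ℝ) {N : ℕ} {a : ℕ → ℝ}
    (had : ∀ j < N, d ≤ a j) (ha : ∀ j < N, |ρ - (s + j * d)| ≤ a j) :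
    ∫ t in s..s + N * d, log (ρ - t) ≤ d * ∑ j ∈ Finset.range N, log (2 * a j) := by
  have hcell (j : ℕ) (hj : j < N) :
      ∫ t in s + j * d..s + (j + 1 : ℕ) * d, log (ρ - t) ≤ d * log (2 * a j) := by
    have hlen : s + (j + 1 : ℕ) * d - (s + j * d) = d := by push_cast; ring
    refine (integral_log_sub_le (b := 2 * a j) (by linarith) fun t ht ↦ ?_).trans_eq (by rw [hlen])
    calc |ρ - t| ≤ |ρ - (s + j * d)| + |s + j * d - t| := abs_sub_le _ _ _
      _ ≤ a j + d := by
        gcongr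
        · exact ha j hj
        · rw [abs_sub_comm, abs_of_nonneg (by linarith [ht.1])]
          linarith [ht.2]
      _ ≤ 2 * a j := by linarith [had j hj]
  calc ∫ t in s..s + N * d, log (ρ - t)
      = ∑ j ∈ Finset.range N, ∫ t in s + j * d..s + (j + 1 : ℕ) * d, log (ρ - t) := by
        rw [intervalIntegral.sum_integral_adjacent_intervals (a := fun j : ℕ ↦ s + j * d)
          fun j _ ↦ intervalIntegrable_log_sub ρ _ _, Nat.cast_zero, zero_mul, add_zero]
    _ ≤ ∑ j ∈ Finset.range N, d * log (2 * a j) :=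
        Finset.sum_le_sum fun j hj ↦ hcell j (Finset.mem_range.1 hj)
    _ = d * ∑ j ∈ Finset.range N, log (2 * a j) := (Finset.mul_sum ..).symm

lemma neg_two_le_integral_log_sub {r ρ : ℝ} (hr : r ∈ Icc (0 : ℝ) 1) (hρ : ρ ∈ Icc (0 : ℝ) 1) :
    -2 ≤ ∫ t in r..1, log (ρ - t) := by
  have hmul_log {x : ℝ} (hx : -1 ≤ x) : x - 1 ≤ x * log x := by
    rcases le_total 0 x with h | h
    · exact self_sub_one_le_mul_log h
    · have hlog : log x ≤ 0 := by
        rw [← log_neg_eq_log]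
        exact log_nonpos (by linarith) (by linarith)
      linarith [mul_nonneg_of_nonpos_of_nonpos h hlog]
  have hleft := hmul_log (x := ρ - r) (by linarith [hρ.1, hr.2])
  have hright := hmul_log (x := 1 - ρ) (by linarith [hρ.2])
  rw [intervalIntegral.integral_comp_sub_left (fun t ↦ log t), integral_log,
    ← log_neg_eq_log (ρ - 1), neg_sub]
  linarith

lemma sum_log_two_div_le {r ρ : ℝ} (hr : r ∈ Ico (0 : ℝ) 1) (hρ : ρ ∈ Icc (0 : ℝ) 1) {N : ℕ}
    (hN : 0 < N) {a : ℕ → ℝ} (had : ∀ j < N, (1 - r) / N ≤ a j)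
    (ha : ∀ j < N, |ρ - (r + j * ((1 - r) / N))| ≤ a j) :
    ∑ j ∈ Finset.range N, log (2 / a j) ≤ 4 * N / (1 - r) := by
  have hr1 : 0 < 1 - r := sub_pos.2 hr.2
  have hd : 0 < (1 - r) / N := by positivity
  have hNd : N * ((1 - r) / N) = 1 - r := by field_simp
  have hint : -2 ≤ (1 - r) / N * ∑ j ∈ Finset.range N, log (2 * a j) := by
    refine (neg_two_le_integral_log_sub ⟨hr.1, hr.2.le⟩ hρ).trans ?_
    simpa only [hNd, add_sub_cancel] using integral_log_sub_le_mul_sum hd.le r ρ had ha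
  have hterm : ∀ j ∈ Finset.range N, log (2 / a j) = log 4 - log (2 * a j) := by
    intro j hj
    have haj : 0 < a j := hd.trans_le (had j (Finset.mem_range.1 hj))
    rw [← log_div four_ne_zero (by positivity)]
    congr 1
    field_simp
    norm_num
  have hlog_four : log 4 ≤ 2 := by linarith [log_four_eq, log_two_lt_d9]
  rw [Finset.sum_congr rfl hterm, Finset.sum_sub_distrib, Finset.sum_const, Finset.card_range,
    nsmul_eq_mul, le_div_iff₀ hr1]
  have hint_scaled : -2 * N ≤ (1 - r) * ∑ j ∈ Finset.range N, log (2 * a j) := by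
    calc -2 * (N : ℝ) ≤ (1 - r) / N * (∑ j ∈ Finset.range N, log (2 * a j)) * N := by gcongr
      _ = (1 - r) * ∑ j ∈ Finset.range N, log (2 * a j) := by field_simp
  have hlog_scaled : N * (log 4 * (1 - r)) ≤ N * 2 := by
    gcongr
    exact (mul_le_of_le_one_right (log_nonneg (by norm_num)) (sub_le_self 1 hr.1)).trans hlog_four
  linarith

/-- The sum of the Green functions of the unit disc with poles `e j`: nonnegative and harmonic away
from the poles, where the true value `+∞` is replaced by a junk value, and zero on the circle. -/
def greenPotential {ι : Type*} (s : Finset ι) (e : ι → ℂ) (z : ℂ) : ℝ :=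
  ∑ j ∈ s, log ‖Complex.canonicalFactor 1 (e j) z‖

variable {ι : Type*} {s : Finset ι} {e : ι → ℂ} {z w : ℂ}

lemma greenPotential_eq_zero_of_mem_sphere (he : ∀ j ∈ s, e j ∈ ball 0 1) (hz : z ∈ sphere 0 1) :
    greenPotential s e z = 0 := by
  refine Finset.sum_eq_zero fun j hj ↦ ?_
  rw [Complex.norm_canonicalFactor_eval_circle_eq_one (he j hj) hz, log_one]

lemma harmonicAt_greenPotential (he : ∀ j ∈ s, e j ∈ ball 0 1) (hz : z ∈ closedBall 0 1)
    (hne : ∀ j ∈ s, z ≠ e j) : HarmonicAt (greenPotential s e) z := by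
  have hterm (j : ι) (hj : j ∈ s) :
      HarmonicAt (fun w ↦ log ‖Complex.canonicalFactor 1 (e j) w‖) z :=
    (Complex.analyticOnNhd_canonicalFactor 1 (e j) z (hne j hj)).harmonicAt_log_norm
      (Complex.canonicalFactor_ne_zero (he j hj) hz (hne j hj))
  have hsum := Finset.sum_induction _ (HarmonicAt · z) (fun _ _ ↦ HarmonicAt.add)
    (harmonicAt_const 0) hterm
  rwa [Finset.sum_fn] at hsum

lemma log_norm_canonicalFactor_le (hw : w ∈ ball 0 1) (hz : z ∈ closedBall 0 1) (hzw : z ≠ w) :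
    log ‖Complex.canonicalFactor 1 w z‖ ≤ log (2 / ‖z - w‖) := by
  have hpos := norm_pos_iff.2 (Complex.canonicalFactor_ne_zero hw hz hzw)
  refine log_le_log hpos ?_
  rw [mem_ball_zero_iff] at hw
  rw [mem_closedBall_zero_iff] at hz
  rw [Complex.canonicalFactor_apply, Complex.ofReal_one, one_pow, one_mul, norm_div]
  gcongr
  calc ‖1 - (starRingEnd ℂ) w * z‖ ≤ ‖(1 : ℂ)‖ + ‖(starRingEnd ℂ) w * z‖ := norm_sub_le _ _
    _ ≤ 1 + 1 * 1 := by
        rw [norm_one, norm_mul, RCLike.norm_conj]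
        gcongr
    _ = 2 := by norm_num

lemma one_sub_norm_le_log_norm_canonicalFactor_zero (hw : w ≠ 0) :
    1 - ‖w‖ ≤ log ‖Complex.canonicalFactor 1 w 0‖ := by
  have hnorm : ‖Complex.canonicalFactor 1 w 0‖ = ‖w‖⁻¹ := by
    simp [Complex.canonicalFactor_apply]
  rw [hnorm]
  simpa only [inv_inv] using one_sub_inv_le_log_of_pos (inv_pos.2 (norm_pos_iff.2 hw))

section Equispaced

variable {r : ℝ} {N : ℕ} {e : ℕ → ℂ}

lemma equispaced_mem_Ico (hr : r < 1) {j : ℕ} (hj : j < N) : r + j * ((1 - r) / N) ∈ Ico r 1 := by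
  have hr1 : 0 < 1 - r := sub_pos.2 hr
  have hN : (0 : ℝ) < N := Nat.cast_pos.2 (Nat.zero_lt_of_lt hj)
  have hlt : j * ((1 - r) / N) < 1 - r := by
    rw [mul_div_left_comm]
    exact mul_lt_of_lt_one_right hr1 ((div_lt_one hN).2 (Nat.cast_lt.2 hj))
  exact ⟨le_add_of_nonneg_right (by positivity), by linarith⟩

lemma mem_ball_of_equispaced (hr : r < 1) (he : ∀ j < N, e j ∈ sphere 0 (r + j * ((1 - r) / N))) :
    ∀ j ∈ Finset.range N, e j ∈ ball (0 : ℂ) 1 := by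
  intro j hj
  have hj := Finset.mem_range.1 hj
  exact mem_ball.2 ((mem_sphere.1 (he j hj)).trans_lt (equispaced_mem_Ico hr hj).2)

lemma greenPotential_le_of_equispaced (hr : r ∈ Ico (0 : ℝ) 1) (hN : 0 < N)
    (he : ∀ j < N, e j ∈ sphere 0 (r + j * ((1 - r) / N))) (hz : z ∈ closedBall 0 1)
    (hfar : ∀ j < N, (1 - r) / N ≤ ‖z - e j‖) :
    greenPotential (Finset.range N) e z ≤ 4 * N / (1 - r) := by
  have hd : 0 < (1 - r) / N := div_pos (sub_pos.2 hr.2) (Nat.cast_pos.2 hN)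
  calc greenPotential (Finset.range N) e z ≤ ∑ j ∈ Finset.range N, log (2 / ‖z - e j‖) := by
        refine Finset.sum_le_sum fun j hj ↦ ?_
        have hzj : 0 < ‖z - e j‖ := hd.trans_le (hfar j (Finset.mem_range.1 hj))
        exact log_norm_canonicalFactor_le (mem_ball_of_equispaced hr.2 he j hj) hz
          (sub_ne_zero.1 (norm_pos_iff.1 hzj))
    _ ≤ 4 * N / (1 - r) := by
        refine sum_log_two_div_le hr ⟨norm_nonneg z, mem_closedBall_zero_iff.1 hz⟩ hN hfar
          fun j hj ↦ ?_
        rw [← mem_sphere_zero_iff_norm.1 (he j hj)]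
        exact abs_norm_sub_norm_le z (e j)

lemma le_greenPotential_zero_of_equispaced (hr : r ∈ Ioo (0 : ℝ) 1) (hN : 0 < N)
    (he : ∀ j < N, e j ∈ sphere 0 (r + j * ((1 - r) / N))) :
    (1 - r) * N / 2 ≤ greenPotential (Finset.range N) e 0 := by
  have hsum_id : ∑ j ∈ Finset.range N, (j : ℝ) ≤ N * N / 2 := by
    have hnat : (∑ j ∈ Finset.range N, j) * 2 ≤ N * N := by
      rw [Finset.sum_range_id_mul_two]
      gcongr
      exact N.sub_le 1
    rw [le_div_iff₀ two_pos]
    simpa only [Nat.cast_mul, Nat.cast_sum, Nat.cast_ofNat] using Nat.cast_le (α := ℝ).2 hnat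
  have hr1 : 0 < 1 - r := sub_pos.2 hr.2
  calc (1 - r) * N / 2 = N * (1 - r) - N * N / 2 * ((1 - r) / N) := by field_simp; ring
    _ ≤ N * (1 - r) - (∑ j ∈ Finset.range N, (j : ℝ)) * ((1 - r) / N) := by gcongr
    _ = ∑ j ∈ Finset.range N, (1 - (r + j * ((1 - r) / N))) := by
        simp only [← sub_sub, Finset.sum_sub_distrib, Finset.sum_const, Finset.card_range,
          nsmul_eq_mul, Finset.sum_mul]
        ring
    _ ≤ greenPotential (Finset.range N) e 0 := by
        refine Finset.sum_le_sum fun j hj ↦ ?_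
        have hj := Finset.mem_range.1 hj
        have hnorm := mem_sphere_zero_iff_norm.1 (he j hj)
        rw [← hnorm]
        refine one_sub_norm_le_log_norm_canonicalFactor_zero (norm_pos_iff.1 ?_)
        exact hnorm ▸ hr.1.trans_le (equispaced_mem_Ico hr.2 hj).1

end Equispaced

end GreenPotential

section DiscEstimate

variable {E : Type*} [NormedAddCommGroup E] [InnerProductSpace ℂ E] [ProperSpace E] {v : E → ℝ}
  {D : Set E} {f : ℂ → E} {c : ℝ}

lemma RealPSHOn.comp_le_neg_mul_greenPotential (hv : RealPSHOn v D) (hD : IsOpen D)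
    (hv_nonpos : ∀ x ∈ D, v x ≤ 0) (hf : AnalyticOnNhd ℂ f (closedBall 0 1))
    (hfD : MapsTo f (closedBall 0 1) D) {ι : Type*} {s : Finset ι} {e : ι → ℂ}
    (he : ∀ j ∈ s, e j ∈ ball 0 1) {τ m : ℝ} (hτ : 0 < τ)
    (hbad : ∀ j ∈ s, ∀ w ∈ closedBall 0 1, ‖w - e j‖ ≤ τ → v (f w) ≤ -c)
    (hpot : ∀ w ∈ closedBall 0 1, (∀ j ∈ s, τ ≤ ‖w - e j‖) → m * greenPotential s e w ≤ c)
    {z : ℂ} (hz : z ∈ closedBall 0 1) (hfar : ∀ j ∈ s, τ ≤ ‖z - e j‖) :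
    v (f z) ≤ -(m * greenPotential s e z) := by
  let A : Set ℂ := {w ∈ closedBall 0 1 | ∀ j ∈ s, τ ≤ ‖w - e j‖}
  have hA_sub : A ⊆ closedBall 0 1 := sep_subset _ _
  have hA_closed : IsClosed A := by
    have hfar_closed : IsClosed {w : ℂ | ∀ j ∈ s, τ ≤ ‖w - e j‖} := by
      simp only [ofPred_forall]
      exact isClosed_biInter fun j _ ↦ isClosed_le continuous_const (by fun_prop)
    exact isClosed_closedBall.inter hfar_closed
  have hA : IsCompact A := (isCompact_closedBall 0 1).of_isClosed_subset hA_closed hA_sub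
  have hharm : InnerProductSpace.HarmonicOnNhd (fun w ↦ -m * greenPotential s e w) A := by
    intro w hw
    refine (harmonicAt_greenPotential he hw.1 fun j hj hwj ↦ ?_).const_smul
    have := hw.2 j hj
    rw [hwj, sub_self, norm_zero] at this
    exact this.not_gt hτ
  have hbdry : ∀ w ∈ frontier A, v (f w) ≤ -m * greenPotential s e w := by
    intro w hw
    have hwA : w ∈ A := hA_closed.frontier_subset hw
    by_cases hnear : ∃ j ∈ s, ‖w - e j‖ ≤ τ
    · obtain ⟨j, hj, hwj⟩ := hnear
      linarith [hbad j hj w hwA.1 hwj, hpot w hwA.1 hwA.2]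
    · push Not at hnear
      have hw_sphere : w ∈ sphere 0 1 := by
        by_contra hw_not
        have hw_ball : w ∈ ball 0 1 := mem_ball.2 (lt_of_le_of_ne hwA.1 hw_not)
        refine hw.2 (mem_interior_iff_mem_nhds.2 ?_)
        filter_upwards [isOpen_ball.mem_nhds hw_ball, (eventually_all_finset s).2 fun j hj ↦
          (continuous_id.sub continuous_const).norm.continuousAt.eventually_const_le (hnear j hj)]
          with t ht ht_far using ⟨ball_subset_closedBall ht, ht_far⟩
      rw [greenPotential_eq_zero_of_mem_sphere he hw_sphere, mul_zero]
      exact hv_nonpos _ (hfD hwA.1)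
  simpa only [neg_mul] using hv.comp_le_of_harmonic hD hA (hf.mono hA_sub) (hfD.mono_left hA_sub)
    hharm.continuousOn (hharm.mono interior_subset) hbdry z ⟨hz, hfar⟩

lemma RealPSHOn.comp_zero_le_of_equispaced (hv : RealPSHOn v D) (hD : IsOpen D)
    (hv_nonpos : ∀ x ∈ D, v x ≤ 0) (hf : AnalyticOnNhd ℂ f (closedBall 0 1))
    (hfD : MapsTo f (closedBall 0 1) D) (hc : 0 ≤ c) {r : ℝ} (hr : r ∈ Ioo (0 : ℝ) 1) {N : ℕ}
    (hN : 0 < N) {e : ℕ → ℂ} (he : ∀ j < N, e j ∈ sphere 0 (r + j * ((1 - r) / N)))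
    (hbad : ∀ j < N, ∀ w ∈ closedBall 0 1, ‖w - e j‖ ≤ (1 - r) / N → v (f w) ≤ -c) :
    v (f 0) ≤ -(c * (1 - r) ^ 2 / 8) := by
  have hr1 : 0 < 1 - r := sub_pos.2 hr.2
  by_cases hfar : ∀ j < N, (1 - r) / N ≤ ‖0 - e j‖
  · let m : ℝ := c * (1 - r) / (4 * N)
    have hm : 0 ≤ m := by positivity
    have hpot : ∀ w ∈ closedBall 0 1, (∀ j ∈ Finset.range N, (1 - r) / N ≤ ‖w - e j‖) →
        m * greenPotential (Finset.range N) e w ≤ c := by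
      intro w hw hw_far
      calc m * greenPotential (Finset.range N) e w ≤ m * (4 * N / (1 - r)) :=
            mul_le_mul_of_nonneg_left (greenPotential_le_of_equispaced ⟨hr.1.le, hr.2⟩ hN he hw
              fun j hj ↦ hw_far j (Finset.mem_range.2 hj)) hm
        _ = c := by simp only [m]; field_simp
    calc v (f 0) ≤ -(m * greenPotential (Finset.range N) e 0) :=
          hv.comp_le_neg_mul_greenPotential hD hv_nonpos hf hfD (mem_ball_of_equispaced hr.2 he)
            (by positivity) (fun j hj ↦ hbad j (Finset.mem_range.1 hj)) hpot
            (mem_closedBall_self zero_le_one) fun j hj ↦ hfar j (Finset.mem_range.1 hj)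
      _ ≤ -(m * ((1 - r) * N / 2)) :=
          neg_le_neg (mul_le_mul_of_nonneg_left
            (le_greenPotential_zero_of_equispaced hr hN he) hm)
      _ = -(c * (1 - r) ^ 2 / 8) := by simp only [m]; field_simp; ring
  · push Not at hfar
    obtain ⟨j, hj, hlt⟩ := hfar
    have hr_sq : (1 - r) ^ 2 ≤ 1 := pow_le_one₀ hr1.le (by linarith [hr.1])
    calc v (f 0) ≤ -c := hbad j hj 0 (by simp) hlt.le
      _ ≤ -(c * (1 - r) ^ 2 / 8) := by nlinarith

lemma RealPSHOn.comp_zero_le_of_forall_sphere (hv : RealPSHOn v D) (hD : IsOpen D)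
    (hv_nonpos : ∀ x ∈ D, v x ≤ 0) (hf : AnalyticOnNhd ℂ f (closedBall 0 1))
    (hfD : MapsTo f (closedBall 0 1) D) (hc : 0 ≤ c) {r τ : ℝ} (hr : r ∈ Ioo (0 : ℝ) 1)
    (hτ : 0 < τ) (hbad : ∀ s ∈ Ico r 1, ∃ e ∈ sphere (0 : ℂ) s, ∀ w ∈ closedBall 0 1,
      ‖w - e‖ ≤ τ → v (f w) ≤ -c) :
    v (f 0) ≤ -(c * (1 - r) ^ 2 / 8) := by
  have hr1 : 0 < 1 - r := sub_pos.2 hr.2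
  obtain ⟨N, hN⟩ := exists_nat_gt ((1 - r) / τ)
  have hN0 : (0 : ℝ) < N := (by positivity : 0 < (1 - r) / τ).trans hN
  have hstep : (1 - r) / N ≤ τ := (div_le_comm₀ hN0 hτ).2 hN.le
  choose! e he_sphere he_bad using hbad
  exact hv.comp_zero_le_of_equispaced hD hv_nonpos hf hfD hc hr (Nat.cast_pos.1 hN0)
    (e := fun j ↦ e (r + j * ((1 - r) / N)))
    (fun j hj ↦ he_sphere _ (equispaced_mem_Ico hr.2 hj))
    fun j hj w hw hwe ↦ he_bad _ (equispaced_mem_Ico hr.2 hj) w hw (hwe.trans hstep)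

lemma exists_mem_sphere_norm_le {F : Type*} [NormedAddCommGroup F] [NormedSpace ℂ F] {g : ℂ → F}
    {a z : ℂ} {s : ℝ} (hs : 0 < s) (hg : DiffContOnCl ℂ g (ball a s)) (hz : z ∈ closedBall a s) :
    ∃ e ∈ sphere a s, ‖g z‖ ≤ ‖g e‖ := by
  obtain ⟨e, he, hmax⟩ :=
    Complex.exists_mem_frontier_isMaxOn_norm isBounded_ball (nonempty_ball.2 hs) hg
  rw [frontier_ball a hs.ne'] at he
  rw [closure_ball a hs.ne'] at hmax
  exact ⟨e, he, hmax hz⟩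

-- By the maximum principle the disc leaves `ball p R₂` on every circle of radius `≥ r`.
lemma RealPSHOn.comp_zero_le_of_exit (hv : RealPSHOn v D) (hD : IsOpen D)
    (hv_nonpos : ∀ x ∈ D, v x ≤ 0) (hf : AnalyticOnNhd ℂ f (closedBall 0 1))
    (hfD : MapsTo f (closedBall 0 1) D) (hc : 0 ≤ c) {p : E} {R₁ R₂ : ℝ} (hR : R₁ < R₂)
    (hvc : ∀ x ∈ D \ ball p R₁, v x ≤ -c) {r : ℝ} (hr : r ∈ Ioo (0 : ℝ) 1) {ζ : ℂ}
    (hζ : ‖ζ‖ ≤ r) (hexit : R₂ ≤ ‖f ζ - p‖) :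
    v (f 0) ≤ -(c * (1 - r) ^ 2 / 8) := by
  have hunif : UniformContinuousOn f (closedBall 0 1) :=
    (isCompact_closedBall 0 1).uniformContinuousOn_of_continuous hf.continuousOn
  obtain ⟨τ, hτ, hclose⟩ := Metric.uniformContinuousOn_iff_le.1 hunif _ (sub_pos.2 hR)
  refine hv.comp_zero_le_of_forall_sphere hD hv_nonpos hf hfD hc hr hτ fun s hs ↦ ?_
  have hdiff : DiffContOnCl ℂ (fun w ↦ f w - p) (ball 0 s) := by
    refine DifferentiableOn.diffContOnCl fun w hw ↦ ?_
    have hw1 : w ∈ closedBall 0 1 :=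
      closedBall_subset_closedBall hs.2.le (closure_ball_subset_closedBall hw)
    exact ((hf w hw1).differentiableAt.sub_const p).differentiableWithinAt
  obtain ⟨e, he, hle⟩ := exists_mem_sphere_norm_le (hr.1.trans_le hs.1) hdiff
    (mem_closedBall_zero_iff.2 (hζ.trans hs.1))
  refine ⟨e, he, fun w hw hwe ↦ hvc _ ⟨hfD hw, fun hwp ↦ ?_⟩⟩
  have he1 : e ∈ closedBall 0 1 :=
    closedBall_subset_closedBall hs.2.le (sphere_subset_closedBall he)
  have hef : dist (f e) (f w) ≤ R₂ - R₁ := hclose e he1 w hw (by rwa [dist_comm, dist_eq_norm])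
  have htri := dist_triangle (f e) (f w) p
  rw [dist_eq_norm (f e) p] at htri
  linarith [mem_ball.1 hwp]

end DiscEstimate

section Truncation

variable {n : ℕ} {φ : Cn n → EReal} {D : Set (Cn n)} {x : Cn n} {m : ℝ}

/-- The real-valued truncation `max φ m`; the junk value `0` occurs only where `φ = ⊤`. -/
def truncBelow (φ : Cn n → EReal) (m : ℝ) (x : Cn n) : ℝ :=
  (max (φ x) (m : EReal)).toReal

lemma coe_truncBelow (hx : φ x ≠ ⊤) : (truncBelow φ m x : EReal) = max (φ x) m :=
  EReal.coe_toReal (max_lt hx.lt_top (EReal.coe_lt_top m)).ne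
    ((EReal.bot_lt_coe m).trans_le (le_max_right _ _)).ne'

lemma truncBelow_le_iff (hx : φ x ≠ ⊤) {y : ℝ} : truncBelow φ m x ≤ y ↔ φ x ≤ y ∧ m ≤ y := by
  rw [← EReal.coe_le_coe_iff, coe_truncBelow hx, max_le_iff, EReal.coe_le_coe_iff]

lemma truncBelow_lt_iff (hx : φ x ≠ ⊤) {y : ℝ} : truncBelow φ m x < y ↔ φ x < y ∧ m < y := by
  rw [← EReal.coe_lt_coe_iff, coe_truncBelow hx, max_lt_iff, EReal.coe_lt_coe_iff]

lemma PSHOn.realPSHOn_truncBelow (hφ : PSHOn φ D) (htop : ∀ x ∈ D, φ x ≠ ⊤) (m : ℝ) :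
    RealPSHOn (truncBelow φ m) D where
  usc x hx y hy := by
    have hlt := (truncBelow_lt_iff (htop x hx)).1 hy
    filter_upwards [hφ.1 x hx y hlt.1, self_mem_nhdsWithin] with w hw hwD
    exact (truncBelow_lt_iff (htop w hwD)).2 ⟨hw, hlt.2⟩
  sub_mean a ha b c r hr hD G hG hle := by
    have hbound (t : ℂ) (ht : t ∈ sphere c r) : φ (a + (t - c) • b) ≤ G t ∧ m ≤ G t :=
      (truncBelow_le_iff (htop _ (hD t (sphere_subset_closedBall ht)))).1 (hle t ht)
    have hmem (θ : ℝ) : circleMap c r θ ∈ sphere c r := circleMap_mem_sphere c hr.le θ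
    refine (truncBelow_le_iff (htop a ha)).2 ⟨?_, ?_⟩
    · rw [Real.circleAverage_def, smul_eq_mul, ← one_div]
      refine hφ.2 a ha b r hr (fun t ht ↦ ?_) (fun θ ↦ G (circleMap c r θ))
        (hG.comp_continuous (continuous_circleMap c r) hmem) fun θ ↦ ?_
      · simpa using hD (c + t) (by simpa using ht)
      · simpa only [circleMap, add_sub_cancel_left] using (hbound _ (hmem θ)).1
    · rw [← Real.circleAverage_const m c r]
      refine Real.circleAverage_mono (circleIntegrable_const m c r)
        (hG.circleIntegrable hr.le) fun t ht ↦ ?_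
      rw [abs_of_pos hr] at ht
      exact (hbound t ht).2

end Truncation

section HolomorphicDisc

/-- `f` restricts to a holomorphic disc `𝔻 → D` centred at `z`, i.e. a competitor in the definition
of the Kobayashi metric of `D` at `z`. -/
structure IsHolDisc {E : Type*} [NormedAddCommGroup E] [NormedSpace ℂ E] (f : ℂ → E) (D : Set E)
    (z : E) : Prop where
  differentiableOn : DifferentiableOn ℂ f (ball 0 1)
  mapsTo : MapsTo f (ball 0 1) D
  map_zero : f 0 = z

lemma mapsTo_ofReal_mul_ball {r : ℝ} (hr : 0 < r) (s : ℝ) :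
    MapsTo (fun w : ℂ ↦ r * w) (ball 0 s) (ball 0 (r * s)) := fun w hw ↦ by
  rw [mem_ball_zero_iff] at hw ⊢
  rw [norm_mul, Complex.norm_of_nonneg hr.le]
  exact mul_lt_mul_of_pos_left hw hr

lemma IsHolDisc.comp_mul {E : Type*} [NormedAddCommGroup E] [NormedSpace ℂ E] {f : ℂ → E}
    {D D' : Set E} {z : E} (hf : IsHolDisc f D z) {r : ℝ} (hr : r ∈ Ioc (0 : ℝ) 1)
    (hD' : MapsTo f (ball 0 r) D') : IsHolDisc (fun w ↦ f (r * w)) D' z where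
  differentiableOn := by
    have hmaps := mapsTo_ofReal_mul_ball hr.1 1
    rw [mul_one] at hmaps
    exact hf.differentiableOn.comp (by fun_prop) (hmaps.mono_right (ball_subset_ball hr.2))
  mapsTo := by
    have hmaps := mapsTo_ofReal_mul_ball hr.1 1
    rw [mul_one] at hmaps
    exact hD'.comp hmaps
  map_zero := by rw [mul_zero, hf.map_zero]

lemma IsHolDisc.mapsTo_ball_of_lt {E : Type*} [NormedAddCommGroup E] [InnerProductSpace ℂ E]
    [ProperSpace E] {v : E → ℝ} {D : Set E} {f : ℂ → E} {z : E} (hf : IsHolDisc f D z)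
    (hv : RealPSHOn v D) (hD : IsOpen D) (hv_nonpos : ∀ x ∈ D, v x ≤ 0) {c : ℝ} (hc : 0 ≤ c) {p : E}
    {R₁ R₂ : ℝ} (hR : R₁ < R₂) (hvc : ∀ x ∈ D \ ball p R₁, v x ≤ -c) {r : ℝ}
    (hr : r ∈ Ioo (0 : ℝ) 1) (hz : -(c * (1 - r) ^ 2 / 8) < v z) :
    MapsTo f (ball 0 (r ^ 2)) (ball p R₂) := by
  intro ζ hζ
  by_contra hexit
  have hmaps : MapsTo (fun w : ℂ ↦ r * w) (ball 0 r⁻¹) (ball 0 1) := by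
    simpa only [mul_inv_cancel₀ hr.1.ne'] using mapsTo_ofReal_mul_ball hr.1 r⁻¹
  have hsub : closedBall (0 : ℂ) 1 ⊆ ball 0 r⁻¹ :=
    closedBall_subset_ball ((one_lt_inv₀ hr.1).2 hr.2)
  have hg : AnalyticOnNhd ℂ (fun w ↦ f (r * w)) (closedBall 0 1) :=
    ((hf.differentiableOn.comp (by fun_prop) hmaps).analyticOnNhd isOpen_ball).mono hsub
  have hle := hv.comp_zero_le_of_exit hD hv_nonpos hg ((hf.mapsTo.comp hmaps).mono_left hsub) hc
    hR hvc hr (ζ := ζ / r) ?_ ?_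
  · rw [mul_zero, hf.map_zero] at hle
    exact hle.not_gt hz
  · rw [norm_div, Complex.norm_of_nonneg hr.1.le, div_le_iff₀ hr.1, ← sq]
    exact (mem_ball_zero_iff.1 hζ).le
  · rw [mul_div_cancel₀ _ (Complex.ofReal_ne_zero.2 hr.1.ne')]
    simpa [dist_eq_norm] using hexit

variable {n : ℕ} {D : Set (Cn n)} {p : Cn n} {φ : Cn n → EReal}

lemma IsPshPeakFn.lt_zero (hφ : IsPshPeakFn D p φ) {x : Cn n} (hx : x ∈ D) (hxp : x ≠ p) :
    φ x < 0 := by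
  obtain ⟨c, hc, hle⟩ := hφ.2.2 {x}ᶜ (isOpen_compl_singleton.mem_nhds hxp.symm)
  exact (hle x ⟨hx, by simp⟩).trans_lt (EReal.coe_neg'.2 hc)

lemma IsPshPeakFn.exists_nhds_mapsTo (hφ : IsPshPeakFn D p φ) (hD : IsOpen D) (hp : p ∉ D)
    {U : Set (Cn n)} (hU : U ∈ 𝓝 p) {r : ℝ} (hr : r ∈ Ioo (0 : ℝ) 1) :
    ∃ W ∈ 𝓝 p, ∀ z ∈ W, ∀ f, IsHolDisc f D z → MapsTo f (ball 0 r) U := by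
  have hneg : ∀ x ∈ D, φ x < 0 := fun x hx ↦ hφ.lt_zero hx (ne_of_mem_of_not_mem hx hp)
  have htop : ∀ x ∈ D, φ x ≠ ⊤ := fun x hx ↦ ((hneg x hx).trans_le le_top).ne
  obtain ⟨q, hq, rfl⟩ : ∃ q ∈ Ioo (0 : ℝ) 1, q ^ 2 = r :=
    ⟨√r, ⟨Real.sqrt_pos.2 hr.1, (Real.sqrt_lt' one_pos).2 (by simpa using hr.2)⟩,
      Real.sq_sqrt hr.1.le⟩
  obtain ⟨R, hR, hRU⟩ := Metric.mem_nhds_iff.1 hU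
  obtain ⟨m, hm, hφm⟩ := hφ.2.2 (ball p (R / 2)) (ball_mem_nhds p (half_pos hR))
  have hδ : -(-m * (1 - q) ^ 2 / 8) < 0 := by
    have hm' : 0 < -m := neg_pos.2 hm
    have hq' : 0 < 1 - q := sub_pos.2 hq.2
    exact neg_neg_of_pos (by positivity)
  refine ⟨_, eventually_nhdsWithin_iff.1
    (hφ.2.1.eventually_const_lt (EReal.coe_neg'.2 hδ)), fun z hz f hf ↦ ?_⟩
  have hzD : z ∈ D := hf.map_zero ▸ hf.mapsTo (mem_ball_self one_pos)
  refine (hf.mapsTo_ball_of_lt (hφ.1.realPSHOn_truncBelow htop m) hD (fun x hx ↦ ?_)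
    (neg_pos.2 hm).le (half_lt_self hR) (fun x hx ↦ ?_) hq ?_).mono_right hRU
  · exact (truncBelow_le_iff (htop x hx)).2 ⟨(hneg x hx).le, hm.le⟩
  · rw [neg_neg]
    exact (truncBelow_le_iff (htop x hx.1)).2 ⟨hφm x hx, le_rfl⟩
  · refine EReal.coe_lt_coe_iff.1 ?_
    rw [coe_truncBelow (htop z hzD)]
    exact lt_max_of_lt_left (hz hzD)

end HolomorphicDisc

section Kobayashi

variable {n : ℕ} {D D' : Set (Cn n)} {z : Cn n}

lemma kobayashi_nonneg (D : Set (Cn n)) (z X : Cn n) : 0 ≤ kobayashi D z X := by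
  refine Real.sInf_nonneg ?_
  rintro _ ⟨α, rfl, -⟩
  exact norm_nonneg α

lemma IsHolDisc.kobayashi_le {f : ℂ → Cn n} (hf : IsHolDisc f D z) (α : ℂ) :
    kobayashi D z (α • deriv f 0) ≤ ‖α‖ := by
  refine csInf_le ⟨0, ?_⟩ ⟨α, rfl, f, hf.differentiableOn, hf.mapsTo, hf.map_zero, rfl⟩
  rintro _ ⟨β, rfl, -⟩
  exact norm_nonneg β

lemma exists_isHolDisc_smul_deriv_eq {E : Type*} [NormedAddCommGroup E] [NormedSpace ℂ E]
    {D : Set E} {z : E} (hD : D ∈ 𝓝 z) (X : E) :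
    ∃ (α : ℂ) (f : ℂ → E), IsHolDisc f D z ∧ α • deriv f 0 = X := by
  have hline : ∀ᶠ w in 𝓝 (0 : ℂ), z + w • X ∈ D := by
    have hcont : Continuous fun w : ℂ ↦ z + w • X := by fun_prop
    exact hcont.continuousAt.eventually_mem (by simpa using hD)
  have hball : ∀ᶠ t in 𝓝[>] (0 : ℝ), closedBall (0 : ℂ) t ⊆ {w | z + w • X ∈ D} :=
    nhdsWithin_le_nhds (eventually_closedBall_subset hline)
  obtain ⟨t, ht, ht0 : 0 < t⟩ := (hball.and self_mem_nhdsWithin).exists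
  have hderiv : HasDerivAt (fun w : ℂ ↦ z + (t * w) • X) ((t : ℂ) • X) 0 := by
    simpa using (((hasDerivAt_id (0 : ℂ)).const_mul (t : ℂ)).smul_const X).const_add z
  refine ⟨(t : ℂ)⁻¹, fun w ↦ z + (t * w) • X, ⟨by fun_prop, fun w hw ↦ ht ?_, by simp⟩, ?_⟩
  · simpa using ball_subset_closedBall (mapsTo_ofReal_mul_ball ht0 1 hw)
  · rw [hderiv.deriv, inv_smul_smul₀ (Complex.ofReal_ne_zero.2 ht0.ne')]

lemma le_kobayashi (hD : D ∈ 𝓝 z) {X : Cn n} {m : ℝ}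
    (hm : ∀ α : ℂ, ∀ f, IsHolDisc f D z → α • deriv f 0 = X → m ≤ ‖α‖) : m ≤ kobayashi D z X := by
  refine le_csInf ?_ ?_
  · obtain ⟨α, f, hf, hX⟩ := exists_isHolDisc_smul_deriv_eq hD X
    exact ⟨‖α‖, α, rfl, f, hf.differentiableOn, hf.mapsTo, hf.map_zero, hX⟩
  · rintro _ ⟨α, rfl, f, hdiff, hmaps, hzero, hX⟩
    exact hm α f ⟨hdiff, hmaps, hzero⟩ hX

lemma mul_kobayashi_le (hD : D ∈ 𝓝 z) {r : ℝ} (hr : r ∈ Ioc (0 : ℝ) 1)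
    (hD' : ∀ f, IsHolDisc f D z → MapsTo f (ball 0 r) D') (X : Cn n) :
    r * kobayashi D' z X ≤ kobayashi D z X := by
  refine le_kobayashi hD fun α f hf hX ↦ ?_
  have hr0 : (r : ℂ) ≠ 0 := Complex.ofReal_ne_zero.2 hr.1.ne'
  have hderiv : α • deriv f 0 = (α / r) • deriv (fun w ↦ f (r * w)) 0 := by
    rw [deriv_comp_mul_left, mul_zero, smul_smul, div_mul_cancel₀ α hr0]
  calc r * kobayashi D' z X ≤ r * ‖α / r‖ := by
        rw [← hX, hderiv]
        exact mul_le_mul_of_nonneg_left ((hf.comp_mul hr (hD' f hf)).kobayashi_le _) hr.1.le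
    _ = ‖α‖ := by
        rw [norm_div, Complex.norm_of_nonneg hr.1.le, mul_div_cancel₀ _ hr.1.ne']

lemma kobayashi_le_of_subset (hD : D ∈ 𝓝 z) (hDD' : D ⊆ D') (X : Cn n) :
    kobayashi D' z X ≤ kobayashi D z X := by
  simpa only [one_mul] using mul_kobayashi_le hD (right_mem_Ioc.2 one_pos)
    (fun f hf ↦ hf.mapsTo.mono_right hDD') X

end Kobayashi

theorem kobayashi_strong_localization_peak_general {n : ℕ} {D : Set (Cn n)} (hD : IsOpen D)
    {p : Cn n} (hp : p ∉ D) {φ : Cn n → EReal} (hφ : IsPshPeakFn D p φ) {U : Set (Cn n)}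
    (hU : U ∈ 𝓝 p) {ε : ℝ} (hε : 0 < ε) :
    ∃ W ∈ 𝓝 p, ∀ z ∈ D ∩ W, ∀ X : Cn n,
      (1 - ε) * kobayashi (D ∩ U) z X ≤ kobayashi D z X ∧
      kobayashi D z X ≤ kobayashi (D ∩ U) z X := by
  have hr : max (1 - ε) (1 / 2) ∈ Ioo (0 : ℝ) 1 :=
    ⟨lt_max_of_lt_right one_half_pos, max_lt (sub_lt_self 1 hε) one_half_lt_one⟩
  obtain ⟨W, hW, hloc⟩ := hφ.exists_nhds_mapsTo hD hp hU hr
  refine ⟨W ∩ interior U, inter_mem hW (interior_mem_nhds.2 hU), fun z ⟨hzD, hzW, hzU⟩ X ↦ ?_⟩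
  have hDz : D ∈ 𝓝 z := hD.mem_nhds hzD
  refine ⟨?_, kobayashi_le_of_subset (inter_mem hDz (mem_interior_iff_mem_nhds.1 hzU))
    inter_subset_left X⟩
  calc (1 - ε) * kobayashi (D ∩ U) z X ≤ max (1 - ε) (1 / 2) * kobayashi (D ∩ U) z X :=
        mul_le_mul_of_nonneg_right (le_max_left _ _) (kobayashi_nonneg _ _ _)
    _ ≤ kobayashi D z X := mul_kobayashi_le hDz (Ioo_subset_Ioc_self hr) (fun f hf ↦
        (hf.mapsTo.mono_left (ball_subset_ball hr.2.le)).inter (hloc z hzW f hf)) X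

/-- Strong localization of the Kobayashi metric near a psh peak boundary
point: `K_D(z;X)/K_{D∩U}(z;X) → 1` as `z → p`, uniformly in `X ≠ 0`. -/
theorem kobayashi_strong_localization_peak {n : ℕ} (D : Set (Cn n)) (hD : IsOpen D)
    (hDconn : IsConnected D) (p : Cn n) (hp : p ∈ frontier D)
    (hφ : ∃ φ : Cn n → EReal, IsPshPeakFn D p φ)
    (U : Set (Cn n)) (hU : IsOpen U) (hUb : Bornology.IsBounded U) (hpU : p ∈ U) :
    ∀ ε : ℝ, 0 < ε → ∃ W ∈ 𝓝 p, ∀ z ∈ D ∩ W, ∀ X : Cn n,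
      (1 - ε) * kobayashi (D ∩ U) z X ≤ kobayashi D z X ∧
      kobayashi D z X ≤ kobayashi (D ∩ U) z X := by
  intro ε hε
  obtain ⟨φ, hφ⟩ := hφ
  exact kobayashi_strong_localization_peak_general hD
    (disjoint_left.1 (disjoint_frontier_iff_isOpen.2 hD) hp) hφ (hU.mem_nhds hpU) hε
end
end

section
/- Let D be a domain in ℂⁿ admitting a psh peak function for a point p ∈ ∂D, and let U be a bounded open neighborhood of p. If lim_{z→p} σ_D(z) = 1, then lim_{z→p} σ_{D∩U}(z) = 1. -/
open Set Metric Filter Topology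
open scoped Classical

noncomputable section

/-- The squeezing function of `D`: the supremum of all `r > 0` such that some holomorphic
embedding `f : D → 𝔹ₙ` with `f z = 0` satisfies `r𝔹ₙ ⊆ f(D)` (equal to `0` if no such
embedding exists, by the convention `sSup ∅ = 0` in `ℝ`). -/
def squeezing {n : ℕ} (D : Set (Cn n)) (z : Cn n) : ℝ :=
  sSup {r : ℝ | 0 < r ∧ ∃ f : Cn n → Cn n, DifferentiableOn ℂ f D ∧ InjOn f D ∧
    MapsTo f D (ball (0 : Cn n) 1) ∧ f z = 0 ∧ ball (0 : Cn n) r ⊆ f '' D}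

/-!
Let `f : D → 𝔹ₙ` be an embedding with `f z = 0` which is nearly optimal for `squeezing D z`. Its
inverse `g` is holomorphic by Osgood's theorem, and a psh function `φ` on `D` restricts to a
subharmonic function `w ↦ φ (g (w • e))` on every slice. Suppose that some `x ∈ D` with `‖f x‖ < r`
lies far from `p`. On the slice through `f x`, the maximum principle shows that the set of `w` with
`g (w • e)` far from `p` meets every circle `‖w‖ = t` of radius slightly above `r`. On this set the
peak function `φ` is at most `-c`, so a Milloux-type estimate gives `φ z ≤ -δ` with `δ` independent
of `f` and `z`, which contradicts `φ z → 0` as `z → p`. Hence for `z` near `p` the points of `D`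
which `f` maps into `r𝔹ₙ` are close to `p`, and the image of `D ∩ U` under `f` still covers `r𝔹ₙ`.
-/

section Smoothness

variable {E F : Type*} [NormedAddCommGroup E] [NormedSpace ℂ E]
  [NormedAddCommGroup F] [NormedSpace ℂ F] {f : E → F} {D : Set E}

lemma hasDerivAt_comp_add_smul {x b : E} {t : ℂ} (hf : DifferentiableAt ℂ f (x + t • b)) :
    HasDerivAt (fun t : ℂ => f (x + t • b)) (fderiv ℂ f (x + t • b) b) t := by
  have hline : HasDerivAt (fun t : ℂ => x + t • b) b t := by
    simpa using ((hasDerivAt_id t).smul_const b).const_add x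
  exact hf.hasFDerivAt.comp_hasDerivAt t hline

lemma differentiableOn_comp_add_smul (hf : DifferentiableOn ℂ f D) (x b : E) :
    DifferentiableOn ℂ (fun t : ℂ => f (x + t • b)) {t | x + t • b ∈ D} :=
  hf.comp (by fun_prop) fun _ => id

lemma fderiv_apply_eq_cderiv [CompleteSpace F] (hD : IsOpen D) (hf : DifferentiableOn ℂ f D)
    {x b : E} {ρ : ℝ} (hρ : 0 < ρ) (hdisc : ∀ t : ℂ, ‖t‖ ≤ ρ → x + t • b ∈ D) :
    fderiv ℂ f x b = Complex.cderiv ρ (fun t : ℂ => f (x + t • b)) 0 := by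
  have hx : x ∈ D := by simpa using hdisc 0 (by simpa using hρ.le)
  have hderiv : HasDerivAt (fun t : ℂ => f (x + t • b)) (fderiv ℂ f x b) 0 := by
    simpa using hasDerivAt_comp_add_smul (f := f) (x := x) (b := b) (t := 0)
      (by simpa using hf.differentiableAt (hD.mem_nhds hx))
  rw [Complex.cderiv_eq_deriv (hD.preimage (by fun_prop : Continuous fun t : ℂ => x + t • b))
    (differentiableOn_comp_add_smul hf x b) hρ fun t ht => hdisc t (by simpa using ht),
    hderiv.deriv]

lemma norm_fderiv_le_div_of_forall_mem_closedBall [CompleteSpace F] (hD : IsOpen D)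
    (hf : DifferentiableOn ℂ f D) {y : E} {s M : ℝ} (hs : 0 < s) (hsub : closedBall y s ⊆ D)
    (hM : ∀ x ∈ closedBall y s, ‖f x‖ ≤ M) : ‖fderiv ℂ f y‖ ≤ M / s := by
  have hM0 : 0 ≤ M := (norm_nonneg _).trans (hM y (mem_closedBall_self hs.le))
  refine ContinuousLinearMap.opNorm_le_bound _ (by positivity) fun v => ?_
  rcases eq_or_ne v 0 with rfl | hv
  · simp
  have hv' : 0 < ‖v‖ := norm_pos_iff.2 hv
  have hmem : ∀ t : ℂ, ‖t‖ ≤ s / ‖v‖ → y + t • v ∈ closedBall y s := fun t ht => by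
    rw [le_div_iff₀ hv'] at ht
    simpa [norm_smul] using ht
  rw [fderiv_apply_eq_cderiv hD hf (by positivity : 0 < s / ‖v‖) fun t ht => hsub (hmem t ht)]
  calc ‖Complex.cderiv (s / ‖v‖) (fun t : ℂ => f (y + t • v)) 0‖
      ≤ M / (s / ‖v‖) := Complex.norm_cderiv_le (by positivity) fun t ht =>
        hM _ (hmem t (by simpa using (mem_sphere_zero_iff_norm.1 ht).le))
    _ = M / s * ‖v‖ := by field_simp

lemma exists_forall_add_smul_mem_ball (x₀ b : E) {s : ℝ} (hs : 0 < s) :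
    ∃ ρ > 0, ∀ x ∈ ball x₀ s, ∀ t : ℂ, ‖t‖ ≤ ρ → x + t • b ∈ ball x₀ (2 * s) := by
  refine ⟨s / (‖b‖ + 1), by positivity, fun x hx t ht => ?_⟩
  have htb : ‖t • b‖ ≤ s := by
    rw [le_div_iff₀ (by positivity)] at ht
    rw [norm_smul]
    nlinarith [norm_nonneg t]
  calc dist (x + t • b) x₀ ≤ dist (x + t • b) x + dist x x₀ := dist_triangle _ _ _
    _ < s + s := add_lt_add_of_le_of_lt (by simpa using htb) hx
    _ = 2 * s := (two_mul s).symm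

variable [FiniteDimensional ℂ E] [FiniteDimensional ℂ F]

lemma differentiableAt_integral_smul_comp_add {κ : ℝ → ℂ} {γ : ℝ → E} (hκ : Continuous κ)
    (hγ : Continuous γ) (hD : IsOpen D) (hf : DifferentiableOn ℂ f D) {C : ℝ}
    (hC : ∀ y ∈ D, ‖fderiv ℂ f y‖ ≤ C) {x₀ : E} {V : Set E} (hV : V ∈ 𝓝 x₀)
    (hVD : ∀ x ∈ V, ∀ θ, x + γ θ ∈ D) (a b : ℝ) :
    DifferentiableAt ℂ (fun x => ∫ θ in a..b, κ θ • f (x + γ θ)) x₀ := by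
  borelize E
  have := FiniteDimensional.complete ℂ F
  have := FiniteDimensional.proper ℂ F
  obtain ⟨K, hK⟩ := (isCompact_uIcc (a := a) (b := b)).exists_bound_of_continuousOn
    hκ.continuousOn
  have hcont : ∀ x ∈ V, Continuous fun θ => κ θ • f (x + γ θ) := fun x hx =>
    hκ.smul (hf.continuousOn.comp_continuous (by fun_prop) (hVD x hx))
  refine (intervalIntegral.hasFDerivAt_integral_of_dominated_of_fderiv_le
    (bound := fun _ => K * C) (F' := fun x θ => κ θ • fderiv ℂ f (x + γ θ))
    hV ?_ ?_ ?_ ?_ ?_ ?_).differentiableAt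
  · filter_upwards [hV] with x hx using (hcont x hx).aestronglyMeasurable
  · exact (hcont x₀ (mem_of_mem_nhds hV)).intervalIntegrable _ _
  · exact (hκ.measurable.smul ((measurable_fderiv ℂ f).comp
      (by fun_prop : Measurable fun θ => x₀ + γ θ))).aestronglyMeasurable
  · refine .of_forall fun θ hθ x hx => ?_
    have hKθ := hK θ (uIoc_subset_uIcc hθ)
    rw [norm_smul]
    exact mul_le_mul hKθ (hC _ (hVD x hx θ)) (norm_nonneg _) ((norm_nonneg _).trans hKθ)
  · exact intervalIntegrable_const
  · refine .of_forall fun θ _ x hx => ?_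
    have hfx := (hf.differentiableAt (hD.mem_nhds (hVD x hx θ))).hasFDerivAt
    exact (hfx.comp x ((hasFDerivAt_id x).add_const (γ θ))).const_smul (κ θ)

lemma differentiableOn_fderiv_apply (hD : IsOpen D) (hf : DifferentiableOn ℂ f D) (b : E) :
    DifferentiableOn ℂ (fun x => fderiv ℂ f x b) D := by
  have := FiniteDimensional.complete ℂ F
  have := FiniteDimensional.proper ℂ E
  intro x₀ hx₀
  obtain ⟨s₀, hs₀, hs₀D⟩ := Metric.isOpen_iff.1 hD x₀ hx₀
  obtain ⟨s, hs, hs_lt⟩ : ∃ s : ℝ, 0 < s ∧ 3 * s < s₀ := ⟨s₀ / 4, by positivity, by linarith⟩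
  have hsD : closedBall x₀ (3 * s) ⊆ D := (closedBall_subset_ball hs_lt).trans hs₀D
  obtain ⟨M, hM⟩ := (isCompact_closedBall x₀ (3 * s)).exists_bound_of_continuousOn
    (hf.continuousOn.mono hsD)
  have hbound : ∀ y ∈ ball x₀ (2 * s), ‖fderiv ℂ f y‖ ≤ M / s := fun y hy => by
    have hy' : closedBall y s ⊆ closedBall x₀ (3 * s) :=
      closedBall_subset_closedBall' (by linarith [mem_ball.1 hy])
    exact norm_fderiv_le_div_of_forall_mem_closedBall hD hf hs (hy'.trans hsD)
      fun x hx => hM x (hy' hx)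
  obtain ⟨ρ, hρ, hdisc⟩ := exists_forall_add_smul_mem_ball x₀ b hs
  have hball : ball x₀ (2 * s) ⊆ D :=
    (ball_subset_closedBall.trans (closedBall_subset_closedBall (by linarith))).trans hsD
  have hcauchy : (fun x => fderiv ℂ f x b) =ᶠ[𝓝 x₀] fun x => (2 * Real.pi * Complex.I : ℂ)⁻¹ •
      ∫ θ in (0 : ℝ)..2 * Real.pi, (deriv (circleMap 0 ρ) θ * ((circleMap 0 ρ θ - 0) ^ 2)⁻¹) •
        f (x + circleMap 0 ρ θ • b) := by
    filter_upwards [ball_mem_nhds x₀ hs] with x hx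
    rw [fderiv_apply_eq_cderiv hD hf hρ fun t ht => hball (hdisc x hx t ht), Complex.cderiv,
      circleIntegral]
    simp only [smul_smul]
  have hκ : Continuous fun θ => deriv (circleMap 0 ρ) θ * ((circleMap 0 ρ θ - 0) ^ 2)⁻¹ := by
    simp only [deriv_circleMap, sub_zero]
    exact (by fun_prop : Continuous _).mul (Continuous.inv₀ (by fun_prop)
      fun θ => pow_ne_zero 2 (circleMap_ne_center hρ.ne'))
  exact (((differentiableAt_integral_smul_comp_add hκ (by fun_prop) isOpen_ball (hf.mono hball)
    hbound (ball_mem_nhds x₀ hs) (fun x hx θ => hdisc x hx _ (by simp [abs_of_pos hρ])) _ _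
    ).fun_const_smul _).congr_of_eventuallyEq hcauchy).differentiableWithinAt

lemma contDiffOn_of_differentiableOn_complex (hD : IsOpen D) (hf : DifferentiableOn ℂ f D)
    (n : ℕ∞) : ContDiffOn ℂ n f D := by
  refine ContDiffOn.of_le (contDiffOn_infty.2 fun m => ?_) (mod_cast le_top)
  induction m generalizing f with
  | zero => exact contDiffOn_zero.2 hf.continuousOn
  | succ m ih =>
    rw [Nat.cast_succ, contDiffOn_succ_iff_fderiv_apply hD.uniqueDiffOn]
    refine ⟨hf, fun h => absurd h (WithTop.natCast_ne_top m), fun y => ?_⟩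
    exact (ih (differentiableOn_fderiv_apply hD hf y)).congr fun x hx => by
      rw [fderivWithin_of_isOpen hD hx]

lemma hasStrictFDerivAt_of_differentiableOn_complex (hD : IsOpen D) (hf : DifferentiableOn ℂ f D)
    {x : E} (hx : x ∈ D) : HasStrictFDerivAt f (fderiv ℂ f x) x :=
  ((contDiffOn_of_differentiableOn_complex hD hf 1).contDiffAt (hD.mem_nhds hx)).hasStrictFDerivAt
    one_ne_zero

lemma differentiableOn_fderiv_of_differentiableOn_complex (hD : IsOpen D)
    (hf : DifferentiableOn ℂ f D) : DifferentiableOn ℂ (fderiv ℂ f) D :=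
  ((contDiffOn_of_differentiableOn_complex hD hf 2).fderiv_of_isOpen hD
    (by norm_num : (1 : WithTop ℕ∞) + 1 ≤ 2)).differentiableOn one_ne_zero

end Smoothness

section OneVariable

lemma not_eventually_eq_of_injOn {α β : Type*} [TopologicalSpace α] {f : α → β} {U : Set α}
    {z : α} [NeBot (𝓝[≠] z)] (hU : U ∈ 𝓝 z) (hinj : InjOn f U) :
    ¬ ∀ᶠ w in 𝓝 z, f w = f z := fun hconst => by
  obtain ⟨w, ⟨hfw, hwU⟩, hwz⟩ := ((hconst.and hU).filter_mono nhdsWithin_le_nhds |>.and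
    (self_mem_nhdsWithin (s := {z}ᶜ))).exists
  exact hwz (hinj hwU (mem_of_mem_nhds hU) hfw)

variable {f : ℂ → ℂ} {U : Set ℂ} {z : ℂ}

lemma nhds_le_map_nhds_of_injOn (hU : IsOpen U) (hf : DifferentiableOn ℂ f U) (hinj : InjOn f U)
    (hz : z ∈ U) : 𝓝 (f z) ≤ map f (𝓝 z) :=
  (hf.analyticAt (hU.mem_nhds hz)).eventually_constant_or_nhds_le_map_nhds.resolve_left
    (not_eventually_eq_of_injOn (hU.mem_nhds hz) hinj)

lemma eventually_deriv_ne_zero_of_injOn (hU : IsOpen U) (hf : DifferentiableOn ℂ f U)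
    (hinj : InjOn f U) (hz : z ∈ U) : ∀ᶠ w in 𝓝[≠] z, deriv f w ≠ 0 := by
  refine ((hf.deriv hU).analyticAt (hU.mem_nhds hz)).eventually_eq_zero_or_eventually_ne_zero
    |>.resolve_left fun hzero => not_eventually_eq_of_injOn (hU.mem_nhds hz) hinj ?_
  obtain ⟨r, hr, hball⟩ := Metric.eventually_nhds_iff_ball.1 (hzero.and (hU.mem_nhds hz))
  filter_upwards [ball_mem_nhds z hr] with w hw
  exact isOpen_ball.is_const_of_deriv_eq_zero (convex_ball z r).isPreconnected
    (hf.mono fun x hx => (hball x hx).2) (fun x hx => (hball x hx).1) hw (mem_ball_self hr)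

lemma continuousAt_invFunOn_of_injOn (hU : IsOpen U) (hf : DifferentiableOn ℂ f U)
    (hinj : InjOn f U) (hz : z ∈ U) : ContinuousAt (Function.invFunOn f U) (f z) := by
  have hinv : Function.invFunOn f U ∘ f =ᶠ[𝓝 z] id :=
    eventually_of_mem (hU.mem_nhds hz) hinj.leftInvOn_invFunOn
  rw [ContinuousAt, hinj.leftInvOn_invFunOn hz]
  refine (map_mono (nhds_le_map_nhds_of_injOn hU hf hinj hz)).trans ?_
  rw [map_map, map_congr hinv, map_id]

-- The inverse is continuous, and holomorphic off the discrete set of critical values; by the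
-- removable singularity theorem it is holomorphic, so the chain rule applies.
lemma deriv_ne_zero_of_injOn (hU : IsOpen U) (hf : DifferentiableOn ℂ f U) (hinj : InjOn f U)
    (hz : z ∈ U) : deriv f z ≠ 0 := by
  set g := Function.invFunOn f U
  have hgf : ∀ w ∈ U, g (f w) = w := fun w hw => hinj.leftInvOn_invFunOn hw
  have hg_cont : ∀ w ∈ U, ContinuousAt g (f w) := fun w hw =>
    continuousAt_invFunOn_of_injOn hU hf hinj hw
  have himage : ∀ w ∈ U, f '' U ∈ 𝓝 (f w) := fun w hw =>
    nhds_le_map_nhds_of_injOn hU hf hinj hw (image_mem_map (hU.mem_nhds hw))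
  have hfg : ∀ y ∈ f '' U, f (g y) = y := fun y hy => Function.invFunOn_eq hy
  have hgz : Tendsto g (𝓝[≠] f z) (𝓝[≠] z) := by
    refine tendsto_nhdsWithin_iff.2
      ⟨(hgf z hz ▸ (hg_cont z hz).tendsto).mono_left nhdsWithin_le_nhds, ?_⟩
    filter_upwards [mem_nhdsWithin_of_mem_nhds (himage z hz), self_mem_nhdsWithin]
      with y hy hyz hgy
    exact hyz ((hfg y hy).symm.trans (congrArg f hgy))
  have hg_diff : ∀ᶠ y in 𝓝[≠] f z, DifferentiableAt ℂ g y := by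
    filter_upwards [hgz.eventually (eventually_deriv_ne_zero_of_injOn hU hf hinj hz),
      mem_nhdsWithin_of_mem_nhds (himage z hz)]
    rintro _ hderiv ⟨w, hw, rfl⟩
    rw [hgf w hw] at hderiv
    refine (HasDerivAt.of_local_left_inverse (hg_cont w hw) ?_ hderiv
      (eventually_of_mem (himage w hw) hfg)).differentiableAt
    rw [hgf w hw]
    exact (hf.differentiableAt (hU.mem_nhds hw)).hasDerivAt
  have hg := (Complex.analyticAt_of_differentiable_on_punctured_nhds_of_continuousAt hg_diff
    (hg_cont z hz)).differentiableAt.hasDerivAt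
  have hchain := hg.comp z (hf.differentiableAt (hU.mem_nhds hz)).hasDerivAt
  have hid : HasDerivAt (g ∘ f) 1 z :=
    (hasDerivAt_id z).congr_of_eventuallyEq (eventually_of_mem (hU.mem_nhds hz) hgf)
  exact right_ne_zero_of_mul (hchain.unique hid ▸ one_ne_zero)

end OneVariable

section Straightening

variable {E : Type*} [NormedAddCommGroup E] [NormedSpace ℂ E]

lemma exists_differentiableOn_localInverse [FiniteDimensional ℂ E] {F : Type*}
    [NormedAddCommGroup F] [NormedSpace ℂ F] [FiniteDimensional ℂ F] {f : E → F} {D : Set E}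
    (hD : IsOpen D) (hf : DifferentiableOn ℂ f D) {x : E} (hx : x ∈ D) {f' : E ≃L[ℂ] F}
    (hf' : HasFDerivAt f (f' : E →L[ℂ] F) x) :
    ∃ (g : F → E) (V : Set F), IsOpen V ∧ f x ∈ V ∧ MapsTo g V D ∧ DifferentiableOn ℂ g V ∧
      LeftInvOn f g V ∧ (∀ᶠ y in 𝓝 x, g (f y) = y) ∧
      HasFDerivAt g (f'.symm : F →L[ℂ] E) (f x) := by
  have := FiniteDimensional.complete ℂ E
  have hstrict : HasStrictFDerivAt f (f' : E →L[ℂ] F) x :=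
    hf'.fderiv ▸ hasStrictFDerivAt_of_differentiableOn_complex hD hf hx
  have hcont : ContDiffAt ℂ 1 f x :=
    (contDiffOn_of_differentiableOn_complex hD hf 1).contDiffAt (hD.mem_nhds hx)
  set g := hstrict.localInverse f f' x
  have hgx : g (f x) = x := hstrict.localInverse_apply_image
  have hg' : HasStrictFDerivAt g (f'.symm : F →L[ℂ] E) (f x) := hstrict.to_localInverse
  have hg_diff : ∀ᶠ y in 𝓝 (f x), DifferentiableAt ℂ g y :=
    ((hcont.to_localInverse hf' one_ne_zero).eventually (by simp)).mono fun y hy =>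
      hy.differentiableAt one_ne_zero
  have hgD : ∀ᶠ y in 𝓝 (f x), g y ∈ D :=
    hg'.continuousAt.eventually (by rw [hgx]; exact hD.mem_nhds hx)
  obtain ⟨V, hV, hVo, hxV⟩ := _root_.eventually_nhds_iff.1
    (hg_diff.and (hgD.and hstrict.eventually_right_inverse))
  exact ⟨g, V, hVo, hxV, fun y hy => (hV y hy).2.1,
    fun y hy => (hV y hy).1.differentiableWithinAt, fun y hy => (hV y hy).2.2,
    hstrict.eventually_left_inverse, hg'.hasFDerivAt⟩

/-- The change of coordinates along the direction `v` which turns `h` into its affine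
approximation at `x₀`. -/
def straighten (h : E → ℂ) (x₀ v x : E) : E :=
  x + ((h x - h x₀ - fderiv ℂ h x₀ (x - x₀)) / fderiv ℂ h x₀ v) • v

variable {h : E → ℂ} {D : Set E} {x₀ v : E}

lemma straighten_self : straighten h x₀ v x₀ = x₀ := by simp [straighten]

lemma fderiv_straighten_sub (hv : fderiv ℂ h x₀ v ≠ 0) (x : E) :
    fderiv ℂ h x₀ (straighten h x₀ v x - x₀) = h x - h x₀ := by
  simp only [straighten, map_sub, map_add, map_smul, smul_eq_mul, div_mul_cancel₀ _ hv]
  ring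

lemma straighten_add_smul (hv : fderiv ℂ h x₀ v ≠ 0) {y : E} {c : ℂ}
    (hy : h (y + c • v) = h x₀ + fderiv ℂ h x₀ (y - x₀)) : straighten h x₀ v (y + c • v) = y := by
  rw [straighten, hy, add_assoc, ← add_smul]
  simp only [map_sub, map_add, map_smul, smul_eq_mul, add_eq_left]
  field_simp
  simp

lemma differentiableOn_straighten (hh : DifferentiableOn ℂ h D) :
    DifferentiableOn ℂ (straighten h x₀ v) D := by
  unfold straighten
  fun_prop

lemma hasFDerivAt_straighten (hh : DifferentiableAt ℂ h x₀) :
    HasFDerivAt (straighten h x₀ v) (ContinuousLinearMap.id ℂ E) x₀ := by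
  have hlin : HasFDerivAt (fun x => fderiv ℂ h x₀ (x - x₀)) (fderiv ℂ h x₀) x₀ :=
    (fderiv ℂ h x₀).hasFDerivAt.comp x₀ ((hasFDerivAt_id x₀).sub_const x₀)
  have hrem := ((hh.hasFDerivAt.sub_const (h x₀)).sub hlin).mul_const (fderiv ℂ h x₀ v)⁻¹
  unfold straighten
  simpa [div_eq_mul_inv] using (hasFDerivAt_id x₀).fun_add (hrem.smul_const v)

lemma exists_straightening [FiniteDimensional ℂ E] (hD : IsOpen D) (hh : DifferentiableOn ℂ h D)
    (hx₀ : x₀ ∈ D) (hv : fderiv ℂ h x₀ v ≠ 0) :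
    ∃ (e : E → E) (V : Set E), IsOpen V ∧ x₀ ∈ V ∧ MapsTo e V D ∧ DifferentiableOn ℂ e V ∧
      InjOn e V ∧ e x₀ = x₀ ∧ HasFDerivAt e (ContinuousLinearMap.id ℂ E) x₀ ∧
      (∀ y ∈ V, h (e y) = h x₀ + fderiv ℂ h x₀ (y - x₀)) ∧
      ∀ᶠ x in 𝓝 x₀, ∀ (y : E) (c : ℂ), x = y + c • v →
        h x = h x₀ + fderiv ℂ h x₀ (y - x₀) → e y = x := by
  obtain ⟨e, V, hVo, hxV, heD, he, hinv, hleft, he'⟩ := exists_differentiableOn_localInverse hD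
    (differentiableOn_straighten hh) hx₀ (f' := ContinuousLinearEquiv.refl ℂ E)
    (hasFDerivAt_straighten (v := v) (hh.differentiableAt (hD.mem_nhds hx₀)))
  rw [straighten_self] at hxV he'
  have he₀ : e x₀ = x₀ := by simpa only [straighten_self] using hleft.self_of_nhds
  refine ⟨e, V, hVo, hxV, heD, he, hinv.injOn, he₀, he', fun y hy => ?_, ?_⟩
  · rw [← hinv hy, fderiv_straighten_sub hv, hinv hy]
    ring
  · filter_upwards [hleft] with x hx
    rintro y c rfl hy
    rwa [straighten_add_smul hv hy] at hx

end Straightening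

section LineZeros

-- Otherwise `G⁻¹` would violate the maximum principle.
lemma exists_zero_of_forall_norm_center_lt {G : ℂ → ℂ} {c : ℂ} {τ : ℝ} (hτ : 0 < τ)
    (hG : DifferentiableOn ℂ G (closedBall c τ)) (hsphere : ∀ t ∈ sphere c τ, ‖G c‖ < ‖G t‖) :
    ∃ t ∈ closedBall c τ, G t = 0 := by
  by_contra! hne
  obtain ⟨t, ht, hmax⟩ := Complex.exists_mem_frontier_isMaxOn_norm isBounded_ball
    ⟨c, mem_ball_self hτ⟩ ((hG.inv hne).mono closure_ball_subset_closedBall).diffContOnCl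
  rw [frontier_ball c hτ.ne'] at ht
  have hc : ‖G c‖⁻¹ ≤ ‖G t‖⁻¹ := by
    simpa using hmax (subset_closure (mem_ball_self hτ))
  exact (hsphere t ht).not_ge ((inv_le_inv₀ (norm_pos_iff.2 (hne c (mem_closedBall_self hτ.le)))
    (norm_pos_iff.2 (hne t (sphere_subset_closedBall ht)))).1 hc)

variable {E : Type*} [NormedAddCommGroup E] [NormedSpace ℂ E] {D : Set E}

lemma eventually_exists_zero_on_line {J : E → ℂ} (hD : IsOpen D) (hJ : DifferentiableOn ℂ J D)
    {b v : E} (hb : b ∈ D) (hJb : J b = 0) (hne : ∀ᶠ t : ℂ in 𝓝[≠] 0, J (b + t • v) ≠ 0)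
    {ε : ℝ} (hε : 0 < ε) : ∀ᶠ y in 𝓝 b, ∃ t : ℂ, ‖t‖ < ε ∧ y + t • v ∈ D ∧ J (y + t • v) = 0 := by
  have hline : Continuous fun q : E × ℂ => q.1 + q.2 • v := by fun_prop
  have hbD : ∀ᶠ t : ℂ in 𝓝 0, b + t • v ∈ D :=
    (hD.preimage (by fun_prop : Continuous fun t : ℂ => b + t • v)).mem_nhds (by simpa using hb)
  obtain ⟨τ₀, hτ₀, hball⟩ := Metric.eventually_nhds_iff_ball.1
    (hbD.and (eventually_nhdsWithin_iff.1 hne))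
  obtain ⟨τ, hτ, hτ_lt⟩ : ∃ τ : ℝ, 0 < τ ∧ τ < min ε τ₀ := exists_between (by positivity)
  have hsub : closedBall (0 : ℂ) τ ⊆ ball 0 τ₀ :=
    closedBall_subset_ball (hτ_lt.trans_le (min_le_right _ _))
  have hdisc : ∀ᶠ y in 𝓝 b, ∀ t ∈ closedBall (0 : ℂ) τ, y + t • v ∈ D :=
    (isCompact_closedBall _ _).eventually_forall_of_forall_eventually fun t ht =>
      hline.continuousAt.eventually (hD.mem_nhds (hball t (hsub ht)).1)
  have hsphere : ∀ᶠ y in 𝓝 b, ∀ t ∈ sphere (0 : ℂ) τ, ‖J y‖ < ‖J (y + t • v)‖ := by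
    refine (isCompact_sphere _ _).eventually_forall_of_forall_eventually fun t ht => ?_
    have htball := hball t (hsub (sphere_subset_closedBall ht))
    have hcont₀ : ContinuousAt (fun q : E × ℂ => ‖J q.1‖) (b, t) :=
      ((hJ.continuousOn.continuousAt (hD.mem_nhds hb)).comp (f := Prod.fst)
        continuousAt_fst).norm
    have hcont : ContinuousAt (fun q : E × ℂ => ‖J (q.1 + q.2 • v)‖) (b, t) :=
      ((hJ.continuousOn.continuousAt (hD.mem_nhds htball.1)).comp (x := (b, t))
        hline.continuousAt).norm
    refine hcont₀.eventually_lt hcont ?_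
    simpa [hJb] using htball.2 (ne_of_mem_sphere ht hτ.ne')
  filter_upwards [hdisc, hsphere] with y hyD hyJ
  obtain ⟨t, ht, hzero⟩ := exists_zero_of_forall_norm_center_lt hτ
    ((differentiableOn_comp_add_smul hJ y v).mono hyD) (by simpa using hyJ)
  exact ⟨t, (mem_closedBall_zero_iff.1 ht).trans_lt (hτ_lt.trans_le (min_le_left _ _)),
    hyD t ht, hzero⟩

/-- The `k`-th iterated derivative of `J` in the direction `v`. -/
def iteratedDirDeriv (v : E) (k : ℕ) (J : E → ℂ) : E → ℂ :=
  (fun h x => fderiv ℂ h x v)^[k] J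

lemma iteratedDirDeriv_succ (v : E) (k : ℕ) (J : E → ℂ) (x : E) :
    iteratedDirDeriv v (k + 1) J x = fderiv ℂ (iteratedDirDeriv v k J) x v := by
  rw [iteratedDirDeriv, Function.iterate_succ_apply', iteratedDirDeriv]

variable [FiniteDimensional ℂ E] {J : E → ℂ}

lemma differentiableOn_iteratedDirDeriv (hD : IsOpen D) (hJ : DifferentiableOn ℂ J D) (v : E)
    (k : ℕ) : DifferentiableOn ℂ (iteratedDirDeriv v k J) D := by
  induction k with
  | zero => exact hJ
  | succ k ih =>
    simpa only [← iteratedDirDeriv_succ] using differentiableOn_fderiv_apply hD ih v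

lemma iteratedDeriv_comp_add_smul (hD : IsOpen D) (hJ : DifferentiableOn ℂ J D) (x v : E) (k : ℕ) :
    ∀ t : ℂ, x + t • v ∈ D →
      iteratedDeriv k (fun t : ℂ => J (x + t • v)) t = iteratedDirDeriv v k J (x + t • v) := by
  induction k with
  | zero => intro t _; simp [iteratedDirDeriv]
  | succ k ih =>
    intro t ht
    have hopen : IsOpen {t : ℂ | x + t • v ∈ D} := hD.preimage (by fun_prop)
    rw [iteratedDeriv_succ, iteratedDirDeriv_succ,
      EventuallyEq.deriv_eq (eventually_of_mem (hopen.mem_nhds ht) ih)]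
    exact (hasDerivAt_comp_add_smul ((differentiableOn_iteratedDirDeriv hD hJ v k).differentiableAt
      (hD.mem_nhds ht))).deriv

lemma exists_iteratedDirDeriv_ne_zero {x₀ v : E} {s : ℝ} (hJ : DifferentiableOn ℂ J (ball x₀ s))
    (hv : x₀ + v ∈ ball x₀ s) (hne : J (x₀ + v) ≠ 0) : ∃ k, iteratedDirDeriv v k J x₀ ≠ 0 := by
  by_contra! hzero
  have hs : 0 < s := pos_of_mem_ball hv
  have hvs : ‖v‖ < s := by simpa using hv
  have hv0 : 0 < ‖v‖ := by
    refine norm_pos_iff.2 fun h => hne ?_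
    simpa [iteratedDirDeriv, h] using hzero 0
  have hdisc : ball (0 : ℂ) (s / ‖v‖) ⊆ {t : ℂ | x₀ + t • v ∈ ball x₀ s} := fun t ht => by
    rw [mem_ball_zero_iff, lt_div_iff₀ hv0] at ht
    simpa [norm_smul] using ht
  have htaylor := Complex.taylorSeries_eq_on_ball
    ((differentiableOn_comp_add_smul hJ x₀ v).mono hdisc)
    (z := 1) (by simpa using (one_lt_div hv0).2 hvs)
  have hcoeff : ∀ k, iteratedDeriv k (fun t : ℂ => J (x₀ + t • v)) 0 = 0 := fun k => by
    rw [iteratedDeriv_comp_add_smul isOpen_ball hJ x₀ v k 0 (by simpa using hs)]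
    simpa using hzero k
  refine hne ?_
  simpa [hcoeff] using htaylor.symm

end LineZeros

section Osgood

/-- Every injective holomorphic map from an open subset of `E` to `E` is an immersion. This is
Osgood's theorem `osgoodProperty`, given a name in order to be proved by induction on the
dimension of `E`. -/
def OsgoodProperty (E : Type*) [NormedAddCommGroup E] [NormedSpace ℂ E] : Prop :=
  ∀ (f : E → E) (D : Set E), IsOpen D → DifferentiableOn ℂ f D → InjOn f D →
    ∀ x ∈ D, Function.Injective (fderiv ℂ f x)

variable {E : Type*} [NormedAddCommGroup E] [NormedSpace ℂ E]

lemma osgoodProperty_of_finrank_eq_one (hE : Module.finrank ℂ E = 1) : OsgoodProperty E := by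
  intro f D hD hf hinj x hx
  have := Module.finite_of_finrank_pos (hE ▸ one_pos : 0 < Module.finrank ℂ E)
  obtain ⟨ℓ⟩ := FiniteDimensional.nonempty_continuousLinearEquiv_of_finrank_eq
    (hE.trans (Module.finrank_self ℂ).symm)
  set v := ℓ.symm 1
  have hspan : ∀ w, w = ℓ w • v := fun w => ℓ.injective (by simp [v])
  have hv : v ≠ 0 := by simp [v]
  have hU : IsOpen {t : ℂ | x + t • v ∈ D} := hD.preimage (by fun_prop)
  have hline : HasDerivAt (fun t : ℂ => f (x + t • v)) (fderiv ℂ f x v) 0 := by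
    simpa using hasDerivAt_comp_add_smul
      (t := 0) (b := v) (by simpa using hf.differentiableAt (hD.mem_nhds hx))
  have hne := deriv_ne_zero_of_injOn hU
    (ℓ.differentiable.comp_differentiableOn (differentiableOn_comp_add_smul hf x v))
    (fun t ht t' ht' h => by simpa [hv] using hinj ht ht' (ℓ.injective h))
    (z := 0) (by simpa using hx)
  have hderiv : deriv (fun t : ℂ => ℓ (f (x + t • v))) 0 = ℓ (fderiv ℂ f x v) :=
    ((ℓ : E →L[ℂ] ℂ).hasFDerivAt.comp_hasDerivAt 0 hline).deriv
  refine (injective_iff_map_eq_zero _).2 fun w hw => ?_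
  rw [hspan w, map_smul, smul_eq_zero] at hw
  rw [hspan w, hw.resolve_right fun h => hne (hderiv.trans (by simp [h])), zero_smul]

lemma exists_fderiv_ne_zero_of_injOn [Nontrivial E] {F : Type*} [NormedAddCommGroup F]
    [NormedSpace ℂ F] {f : E → F} {D : Set E} (hD : IsOpen D) (hne : D.Nonempty)
    (hf : DifferentiableOn ℂ f D) (hinj : InjOn f D) : ∃ x ∈ D, fderiv ℂ f x ≠ 0 := by
  by_contra! hzero
  obtain ⟨x, hx⟩ := hne
  obtain ⟨ε, hε, hball⟩ := Metric.isOpen_iff.1 hD x hx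
  have hconst : ∀ y ∈ ball x ε, f y = f x := fun y hy =>
    isOpen_ball.is_const_of_fderiv_eq_zero (convex_ball x ε).isPreconnected (hf.mono hball)
      (fun z hz => hzero z (hball hz)) hy (mem_ball_self hε)
  have := Module.punctured_nhds_neBot ℂ E x
  exact not_eventually_eq_of_injOn (hD.mem_nhds hx) hinj
    (mem_of_superset (ball_mem_nhds x hε) hconst)

variable [FiniteDimensional ℂ E] {f : E → E} {D : Set E}

lemma exists_continuousLinearMap_injOn_ker {L h : E →L[ℂ] ℂ} (hL : L ≠ 0) (hh : h ≠ 0) :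
    ∃ T : E →L[ℂ] LinearMap.ker (h : E →ₗ[ℂ] ℂ), ∀ u, L u = 0 → T u = 0 → u = 0 := by
  have hfinrank : ∀ {ℓ : E →L[ℂ] ℂ}, ℓ ≠ 0 →
      Module.finrank ℂ (LinearMap.ker (ℓ : E →ₗ[ℂ] ℂ)) + 1 = Module.finrank ℂ E := fun hℓ =>
    Module.Dual.finrank_ker_add_one_of_ne_zero (by exact_mod_cast hℓ)
  let A := LinearEquiv.ofFinrankEq (R := ℂ) (LinearMap.ker (L : E →ₗ[ℂ] ℂ))
    (LinearMap.ker (h : E →ₗ[ℂ] ℂ)) (by have := hfinrank hL; have := hfinrank hh; omega)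
  obtain ⟨T, hT⟩ := LinearMap.exists_extend A.toLinearMap
  refine ⟨LinearMap.toContinuousLinearMap T, fun u hu hTu => ?_⟩
  have hAu : A ⟨u, hu⟩ = 0 := (LinearMap.congr_fun hT ⟨u, hu⟩).symm.trans hTu
  exact congrArg Subtype.val (A.map_eq_zero_iff.1 hAu)

lemma exists_injOn_level_set {F : Type*} [NormedAddCommGroup F] [NormedSpace ℂ F] {f : E → F}
    (hD : IsOpen D) (hf : DifferentiableOn ℂ f D) (hinj : InjOn f D) {x : E} (hx : x ∈ D)
    {L : F →L[ℂ] ℂ} {h' : E →L[ℂ] ℂ} (hh' : h' = L.comp (fderiv ℂ f x)) (hne : h' ≠ 0) :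
    ∃ (G : LinearMap.ker (h' : E →ₗ[ℂ] ℂ) → F) (W : Set (LinearMap.ker (h' : E →ₗ[ℂ] ℂ))),
      IsOpen W ∧ 0 ∈ W ∧ DifferentiableOn ℂ G W ∧ InjOn G W ∧ (∀ w ∈ W, L (G w - f x) = 0) ∧
      HasFDerivAt G ((fderiv ℂ f x).comp (Submodule.subtypeL _)) 0 := by
  have hfx := (hf.differentiableAt (hD.mem_nhds hx)).hasFDerivAt
  have hLf : fderiv ℂ (L ∘ f) x = h' := hh' ▸ (L.hasFDerivAt.comp x hfx).fderiv
  obtain ⟨v, hv⟩ := DFunLike.ne_iff.1 hne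
  obtain ⟨e, V, hV, hxV, heD, he, he_inj, hex, he', hLe, -⟩ := exists_straightening hD
    (L.differentiable.comp_differentiableOn hf) hx (v := v) (by rwa [hLf])
  simp only [Function.comp_apply, hLf] at hLe
  let K := LinearMap.ker (h' : E →ₗ[ℂ] ℂ)
  have hW : IsOpen {w : K | x + w ∈ V} := hV.preimage (by fun_prop)
  refine ⟨fun w => f (e (x + w)), {w | x + w ∈ V}, hW, by simpa using hxV,
    (hf.comp he heD).comp (K.subtypeL.differentiable.const_add x).differentiableOn fun _ => id,
    fun w hw w' hw' h => by simpa using he_inj hw hw' (hinj (heD hw) (heD hw') h),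
    fun w hw => ?_, ?_⟩
  · have hw' : h' w = 0 := w.2
    simp [hLe _ hw, hw']
  · have he'' : HasFDerivAt (fun w : K => e (x + w)) K.subtypeL 0 := by
      exact HasFDerivAt.comp (0 : K) (g := e) (f := fun w : K => x + w)
        (by simpa using he') (K.subtypeL.hasFDerivAt.const_add x)
    exact HasFDerivAt.comp (0 : K) (by simpa [hex] using hfx) he''

-- Restricting to a level set of a nonconstant linear functional of `f` lowers the dimension.
lemma fderiv_injective_of_ne_zero (hE : ∀ K : Submodule ℂ E, K ≠ ⊤ → OsgoodProperty K)
    (hD : IsOpen D) (hf : DifferentiableOn ℂ f D) (hinj : InjOn f D) {x : E} (hx : x ∈ D)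
    (hne : fderiv ℂ f x ≠ 0) : Function.Injective (fderiv ℂ f x) := by
  obtain ⟨v, hv⟩ := DFunLike.ne_iff.1 hne
  obtain ⟨L, hLv⟩ := SeparatingDual.exists_ne_zero (R := ℂ) hv
  obtain ⟨h', hh'⟩ : ∃ h', h' = L.comp (fderiv ℂ f x) := ⟨_, rfl⟩
  have hh'v : h' v ≠ 0 := by simpa [hh'] using hLv
  have hh'0 : h' ≠ 0 := DFunLike.ne_iff.2 ⟨v, hh'v⟩
  obtain ⟨G, W, hW, hW0, hG, hG_inj, hLG, hG'⟩ :=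
    exists_injOn_level_set hD hf hinj hx hh' hh'0
  obtain ⟨T, hT⟩ := exists_continuousLinearMap_injOn_ker
    (fun h => hLv (by simp [h]) : L ≠ 0) hh'0
  have hTG_inj : InjOn (fun w => T (G w - f x)) W := fun w hw w' hw' h => by
    refine hG_inj hw hw' (sub_eq_zero.1 (hT _ ?_ ?_))
    · simpa [sub_eq_zero] using (hLG w hw).trans (hLG w' hw').symm
    · simpa [sub_eq_zero] using h
  have hTG' := T.hasFDerivAt.comp 0 (hG'.sub_const (f x))
  have hker : LinearMap.ker (h' : E →ₗ[ℂ] ℂ) ≠ ⊤ := fun h => hh'v <|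
    show v ∈ LinearMap.ker (h' : E →ₗ[ℂ] ℂ) from h ▸ Submodule.mem_top
  have hTG'_inj := hE _ hker _ W hW
    (T.differentiable.comp_differentiableOn (hG.sub_const (f x))) hTG_inj 0 hW0
  refine (injective_iff_map_eq_zero _).2 fun u hu => ?_
  have huK : u ∈ LinearMap.ker (h' : E →ₗ[ℂ] ℂ) := by simp [hh', hu]
  refine congrArg Subtype.val ((injective_iff_map_eq_zero _).1 hTG'_inj ⟨u, huK⟩ ?_)
  exact (congrArg (· ⟨u, huK⟩) hTG'.fderiv).trans
    (show T (fderiv ℂ f x u) = 0 by rw [hu, map_zero])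

lemma differentiableOn_det {A : E → E →L[ℂ] E} (hA : DifferentiableOn ℂ A D) :
    DifferentiableOn ℂ (fun x => (A x).det) D := by
  let b := Module.finBasis ℂ E
  have hcoord : ∀ i j, DifferentiableOn ℂ (fun x => b.repr (A x (b i)) j) D := fun i j =>
    (LinearMap.toContinuousLinearMap (b.coord j)).differentiable.comp_differentiableOn
      (hA.clm_apply (differentiableOn_const (b i)))
  simp only [ContinuousLinearMap.det, ← LinearMap.det_toMatrix b, Matrix.det_apply,
    LinearMap.toMatrix_apply]
  exact DifferentiableOn.fun_sum fun σ _ => DifferentiableOn.const_smul (fun x hx =>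
    (HasFDerivWithinAt.finsetProd fun i _ =>
      (hcoord i (σ i) x hx).hasFDerivWithinAt).differentiableWithinAt) (Equiv.Perm.sign σ)

-- `h` is a directional derivative of `J` of the largest order for which it still vanishes on the
-- whole zero set of `J`.
lemma exists_reduced_equation {J : E → ℂ} (hD : IsOpen D) (hJ : DifferentiableOn ℂ J D) {x₀ : E}
    (hx₀ : J x₀ = 0) {s : ℝ} (hball : ball x₀ s ⊆ D) (hne : ∃ x ∈ ball x₀ s, J x ≠ 0) :
    ∃ (h : E → ℂ) (b v : E), DifferentiableOn ℂ h D ∧ (∀ x ∈ D, J x = 0 → h x = 0) ∧ b ∈ D ∧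
      J b = 0 ∧ fderiv ℂ h b v ≠ 0 ∧ ∀ᶠ t : ℂ in 𝓝[≠] 0, J (b + t • v) ≠ 0 := by
  obtain ⟨x, hx, hJx⟩ := hne
  set v := x - x₀
  have hex : ∃ k, ∃ b ∈ D, J b = 0 ∧ iteratedDirDeriv v k J b ≠ 0 := by
    obtain ⟨k, hk⟩ := exists_iteratedDirDeriv_ne_zero (v := v) (hJ.mono hball)
      (by simpa [v] using hx) (by simpa [v] using hJx)
    exact ⟨k, x₀, hball (mem_ball_self (pos_of_mem_ball hx)), hx₀, hk⟩
  obtain ⟨b, hb, hJb, hkb⟩ := Nat.find_spec hex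
  obtain ⟨k, hk⟩ := Nat.exists_eq_succ_of_ne_zero (n := Nat.find hex)
    fun h0 => hkb (by rw [h0]; exact hJb)
  refine ⟨iteratedDirDeriv v k J, b, v, differentiableOn_iteratedDirDeriv hD hJ v k,
    fun y hy hJy => ?_, hb, hJb, ?_, ?_⟩
  · by_contra hky
    exact Nat.find_min hex (by omega : k < Nat.find hex) ⟨y, hy, hJy, hky⟩
  · rwa [← iteratedDirDeriv_succ, ← Nat.succ_eq_add_one, ← hk]
  · have hopen : IsOpen {t : ℂ | b + t • v ∈ D} := hD.preimage (by fun_prop)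
    have hana : AnalyticAt ℂ (fun t : ℂ => J (b + t • v)) 0 :=
      (differentiableOn_comp_add_smul hJ b v).analyticAt (hopen.mem_nhds (by simpa using hb))
    refine hana.eventually_eq_zero_or_eventually_ne_zero.resolve_left fun hzero => hkb ?_
    have hiter := iteratedDeriv_comp_add_smul hD hJ b v (Nat.find hex) 0 (by simpa using hb)
    rw [zero_smul, add_zero] at hiter
    rw [← hiter, Filter.EventuallyEq.iteratedDeriv_eq (Nat.find hex) (g := fun _ => 0) hzero]
    simp

lemma exists_injOn_hyperplane_to_zeros {J : E → ℂ} (hD : IsOpen D) (hJ : DifferentiableOn ℂ J D)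
    {x₀ : E} (hx₀ : J x₀ = 0) {s : ℝ} (hball : ball x₀ s ⊆ D) (hne : ∃ x ∈ ball x₀ s, J x ≠ 0) :
    ∃ (e : E → E) (V : Set E) (b : E) (ℓ : E →L[ℂ] ℂ), IsOpen V ∧ b ∈ V ∧ MapsTo e V D ∧
      DifferentiableOn ℂ e V ∧ InjOn e V ∧ ∀ y ∈ V, ℓ (y - b) = 0 → J (e y) = 0 := by
  obtain ⟨h, b, v, hh, hhJ, hb, hJb, hv, hline⟩ :=
    exists_reduced_equation hD hJ hx₀ hball hne
  obtain ⟨e, V, hV, hbV, heD, he, he_inj, -, -, -, hgraph⟩ := exists_straightening hD hh hb hv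
  have hlim : Tendsto (fun q : E × ℂ => q.1 + q.2 • v) (𝓝 (b, 0)) (𝓝 b) :=
    (by fun_prop : Continuous fun q : E × ℂ => q.1 + q.2 • v).tendsto' _ _ (by simp)
  rw [nhds_prod_eq] at hlim
  obtain ⟨P, hP, Q, hQ, hPQ⟩ := Filter.eventually_prod_iff.1 (hlim.eventually hgraph)
  obtain ⟨ε, hε, hQε⟩ := Metric.eventually_nhds_iff_ball.1 hQ
  obtain ⟨W, hW, hWo, hbW⟩ := _root_.eventually_nhds_iff.1
    (hP.and (eventually_exists_zero_on_line hD hJ hb hJb hline hε))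
  refine ⟨e, V ∩ W, b, fderiv ℂ h b, hV.inter hWo, ⟨hbV, hbW⟩, heD.mono_left inter_subset_left,
    he.mono inter_subset_left, he_inj.mono inter_subset_left, fun y hy hℓ => ?_⟩
  obtain ⟨hPy, t, ht, htD, hJt⟩ := hW y hy.2
  rwa [hPQ hPy (hQε t (by simpa using ht)) y t rfl
    (by rw [hhJ _ htD hJt, hhJ _ hb hJb, hℓ, zero_add])]

lemma fderiv_ne_zero_of_injOn (hE : 2 ≤ Module.finrank ℂ E) (hD : IsOpen D)
    (hf : DifferentiableOn ℂ f D) (hinj : InjOn f D)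
    (himm : ∀ x ∈ D, fderiv ℂ f x ≠ 0 → Function.Injective (fderiv ℂ f x)) {x₀ : E}
    (hx₀ : x₀ ∈ D) : fderiv ℂ f x₀ ≠ 0 := by
  intro hzero
  have : Nontrivial E := Module.nontrivial_of_finrank_pos (R := ℂ) (by omega)
  obtain ⟨s, hs, hball⟩ := Metric.isOpen_iff.1 hD x₀ hx₀
  have hdet : ∀ x ∈ D, (fderiv ℂ f x).det = 0 ↔ fderiv ℂ f x = 0 := fun x hx => by
    refine ⟨fun h => ?_, fun h => ?_⟩
    · by_contra hne
      have hunit := (LinearMap.isUnit_iff_ker_eq_bot (fderiv ℂ f x : E →ₗ[ℂ] E)).2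
        (LinearMap.ker_eq_bot.2 (himm x hx hne))
      exact ((LinearMap.isUnit_iff_isUnit_det _).1 hunit).ne_zero h
    · simp [h, ContinuousLinearMap.det]
  obtain ⟨x₁, hx₁, hne⟩ := exists_fderiv_ne_zero_of_injOn isOpen_ball ⟨x₀, mem_ball_self hs⟩
    (hf.mono hball) (hinj.mono hball)
  obtain ⟨e, V, b, ℓ, hV, hbV, heD, he, he_inj, hker⟩ := exists_injOn_hyperplane_to_zeros hD
    (differentiableOn_det (differentiableOn_fderiv_of_differentiableOn_complex hD hf))
    ((hdet x₀ hx₀).2 hzero) hball ⟨x₁, hx₁, fun h => hne ((hdet x₁ (hball hx₁)).1 h)⟩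
  let K := LinearMap.ker (ℓ : E →ₗ[ℂ] ℂ)
  have hK : Nontrivial K := Submodule.nontrivial_iff_ne_bot.2
    (LinearMap.ker_ne_bot_of_finrank_lt (by rwa [Module.finrank_self]))
  have hW : IsOpen {w : K | b + w ∈ V} := hV.preimage (by fun_prop)
  have hfe : DifferentiableOn ℂ (fun y => f (e y)) V := hf.comp he heD
  have hbK : Differentiable ℂ fun w : K => b + (w : E) := K.subtypeL.differentiable.const_add b
  obtain ⟨w, hw, hne⟩ := exists_fderiv_ne_zero_of_injOn (f := fun w : K => f (e (b + w))) hW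
    ⟨0, by simpa using hbV⟩ (hfe.comp hbK.differentiableOn fun _ => id)
    fun w hw w' hw' h => by simpa using he_inj hw hw' (hinj (heD hw) (heD hw') h)
  have hew : DifferentiableAt ℂ (fun w : K => e (b + w)) w :=
    (he.differentiableAt (hV.mem_nhds hw)).comp w (hbK w)
  have hfw : fderiv ℂ f (e (b + w)) = 0 :=
    (hdet _ (heD hw)).1 (hker _ hw (by simp))
  have hcomp := fderiv_comp w (hf.differentiableAt (hD.mem_nhds (heD hw))) hew
  rw [hfw, ContinuousLinearMap.zero_comp] at hcomp
  exact hne hcomp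

theorem osgoodProperty (E : Type*) [NormedAddCommGroup E] [NormedSpace ℂ E]
    [FiniteDimensional ℂ E] : OsgoodProperty E := by
  induction hn : Module.finrank ℂ E using Nat.strong_induction_on generalizing E with
  | _ n ih =>
  subst hn
  rcases Nat.lt_trichotomy (Module.finrank ℂ E) 1 with h | h | h
  · have := Module.finrank_zero_iff.1 (Nat.lt_one_iff.1 h)
    exact fun _ _ _ _ _ _ _ => Function.injective_of_subsingleton _
  · exact osgoodProperty_of_finrank_eq_one h
  · intro f D hD hf hinj
    have himm : ∀ x ∈ D, fderiv ℂ f x ≠ 0 → Function.Injective (fderiv ℂ f x) := fun x hx =>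
      fderiv_injective_of_ne_zero
        (fun K hK => ih _ (Submodule.finrank_lt hK) K rfl) hD hf hinj hx
    exact fun x hx => himm x hx (fderiv_ne_zero_of_injOn h hD hf hinj himm hx)

lemma exists_hasFDerivAt_equiv_of_injOn (hD : IsOpen D) (hf : DifferentiableOn ℂ f D)
    (hinj : InjOn f D) {x : E} (hx : x ∈ D) :
    ∃ f' : E ≃L[ℂ] E, HasFDerivAt f (f' : E →L[ℂ] E) x :=
  ⟨(LinearEquiv.ofInjectiveEndo (fderiv ℂ f x : E →ₗ[ℂ] E)
    (osgoodProperty E f D hD hf hinj x hx)).toContinuousLinearEquiv,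
    (hf.differentiableAt (hD.mem_nhds hx)).hasFDerivAt⟩

lemma differentiableOn_invFunOn_of_injOn (hD : IsOpen D) (hf : DifferentiableOn ℂ f D)
    (hinj : InjOn f D) : DifferentiableOn ℂ (Function.invFunOn f D) (f '' D) := by
  rintro _ ⟨x, hx, rfl⟩
  obtain ⟨f', hf'⟩ := exists_hasFDerivAt_equiv_of_injOn hD hf hinj hx
  obtain ⟨g, V, hV, hxV, hgD, hg, hleft, -, -⟩ :=
    exists_differentiableOn_localInverse hD hf hx hf'
  have heq : EqOn (Function.invFunOn f D) g V := fun y hy => by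
    conv_lhs => rw [← hleft hy]
    exact hinj.leftInvOn_invFunOn (hgD hy)
  exact ((hg.differentiableAt (hV.mem_nhds hxV)).congr_of_eventuallyEq
    (heq.eventuallyEq_of_mem (hV.mem_nhds hxV))).differentiableWithinAt

end Osgood

section Subharmonic

open InnerProductSpace

lemma harmonicAt_comp_analyticAt {H : ℂ → ℝ} {α : ℂ → ℂ} {z : ℂ} (hH : HarmonicAt H (α z))
    (hα : AnalyticAt ℂ α z) : HarmonicAt (H ∘ α) z := by
  obtain ⟨r, hr, hball⟩ := Metric.eventually_nhds_iff_ball.1 hH.eventually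
  obtain ⟨G, hG, hGH⟩ :=
    HarmonicOnNhd.exists_analyticOnNhd_ball_re_eq (f := H) (z := α z) (R := r) hball
  have hre : HarmonicAt (fun w => (G (α w)).re) z :=
    ((hG _ (mem_ball_self hr)).comp hα).harmonicAt_re
  refine (harmonicAt_congr_nhds ?_).1 hre
  filter_upwards [hα.continuousAt.eventually (ball_mem_nhds _ hr)] with w hw using hGH hw

variable {E : Type*} [NormedAddCommGroup E] [InnerProductSpace ℂ E]

lemma harmonicAt_norm_sq_sub_norm_sub_sq {u : ℂ → E} {z : ℂ} (hu : AnalyticAt ℂ u z) (c : E) :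
    HarmonicAt (fun w => ‖u w‖ ^ 2 - ‖u w - c‖ ^ 2) z := by
  have hinner : HarmonicAt (fun w => (2 * inner ℂ c (u w) - inner ℂ c c).re) z :=
    AnalyticAt.harmonicAt_re
      ((analyticAt_const.mul (((innerSL ℂ c).analyticAt _).comp hu)).sub analyticAt_const)
  refine (harmonicAt_congr_nhds (.of_forall fun w => ?_)).1 hinner
  have hnorm := norm_sub_sq (𝕜 := ℂ) (u w) c
  rw [inner_re_symm] at hnorm
  have hself := inner_self_eq_norm_sq (𝕜 := ℂ) c
  simp only [RCLike.re_eq_complex_re] at hnorm hself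
  simp only [Complex.sub_re, Complex.mul_re, Complex.re_ofNat, Complex.im_ofNat, hself]
  linarith

/-- The Hermitian form `ε |L ζ|² - A |ζ - L ζ • e|²`. When `L e = 1`, the vector `L ζ • e` is the
projection of `ζ` to the line `ℂ ∙ e` along the kernel of `L`, so the form is positive on that line
and, for large `A`, very negative away from it. -/
def axialForm (L : E →L[ℂ] ℂ) (e : E) (ε A : ℝ) (ζ : E) : ℝ :=
  ε * ‖L ζ‖ ^ 2 - A * ‖ζ - L ζ • e‖ ^ 2

variable {H : ℂ → ℝ} {L : E →L[ℂ] ℂ} {e : E} {ε A : ℝ}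

lemma continuous_axialForm : Continuous (axialForm L e ε A) := by
  unfold axialForm
  fun_prop

lemma axialForm_smul (t : ℂ) (ζ : E) :
    axialForm L e ε A (t • ζ) = ‖t‖ ^ 2 * axialForm L e ε A ζ := by
  simp only [axialForm, map_smul, smul_assoc, ← smul_sub, norm_smul]
  ring

lemma axialForm_direction (hLe : L e = 1) : axialForm L e ε A e = ε := by
  simp [axialForm, hLe]

lemma eventually_le_axialForm_sub (hε : 0 < ε) (hLe : L e = 1) {F : ℂ → E}
    (hF' : HasDerivAt F e 0) :
    ∀ᶠ t in 𝓝[≠] (0 : ℂ), ε / 2 * ‖t‖ ^ 2 ≤ axialForm L e ε A (F t - F 0) := by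
  have hslope := hasDerivAt_iff_tendsto_slope_zero.1 hF'
  simp only [zero_add] at hslope
  have hlim := ((continuous_axialForm (L := L) (e := e) (ε := ε) (A := A)).tendsto e).comp hslope
  rw [axialForm_direction hLe] at hlim
  filter_upwards [hlim.eventually (lt_mem_nhds (half_lt_self hε)), self_mem_nhdsWithin]
    with t ht ht0
  calc ε / 2 * ‖t‖ ^ 2 ≤ ‖t‖ ^ 2 * axialForm L e ε A (t⁻¹ • (F t - F 0)) := by
        rw [mul_comm]
        exact mul_le_mul_of_nonneg_left ht.le (sq_nonneg _)
    _ = axialForm L e ε A (F t - F 0) := by rw [← axialForm_smul, smul_inv_smul₀ ht0]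

lemma harmonicAt_axialForm_sub_axialForm_sub {F : ℂ → E} {z : ℂ} (hF : AnalyticAt ℂ F z) (c : E) :
    HarmonicAt (fun t => axialForm L e ε A (F t) - axialForm L e ε A (F t - c)) z := by
  have hLF : AnalyticAt ℂ (fun t => L (F t)) z := (L.analyticAt _).comp hF
  have hPF : AnalyticAt ℂ (fun t => F t - L (F t) • e) z := hF.sub (hLF.smul analyticAt_const)
  refine (harmonicAt_congr_nhds (.of_forall fun t => ?_)).1
    (((harmonicAt_norm_sq_sub_norm_sub_sq hLF (L c)).const_smul (c := ε)).sub
      ((harmonicAt_norm_sq_sub_norm_sub_sq hPF (c - L c • e)).const_smul (c := A)))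
  have hproj : F t - L (F t) • e - (c - L c • e) = F t - c - L (F t - c) • e := by
    rw [map_sub]
    module
  simp only [axialForm, Pi.sub_apply, Pi.smul_apply, smul_eq_mul, hproj, map_sub]
  ring

/-- A perturbation, strictly subharmonic in the direction `e`, of the harmonic function `-H` on the
line `ℂ ∙ e`, extended to `E` along the kernel of `L`. -/
def barrier (H : ℂ → ℝ) (L : E →L[ℂ] ℂ) (e : E) (ε A : ℝ) (ζ : E) : ℝ :=
  axialForm L e ε A ζ - H (L ζ)

lemma continuousAt_barrier {ζ : E} (hH : ContinuousAt H (L ζ)) :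
    ContinuousAt (barrier H L e ε A) ζ :=
  continuous_axialForm.continuousAt.sub (hH.comp (f := L) L.continuous.continuousAt)

lemma harmonicAt_barrier_sub_axialForm_sub {F : ℂ → E} {t₀ : ℂ} (hF : AnalyticAt ℂ F t₀)
    (hH : HarmonicAt H (L (F t₀))) :
    HarmonicAt (fun t => barrier H L e ε A (F t) - axialForm L e ε A (F t - F t₀)) t₀ := by
  refine (harmonicAt_congr_nhds (.of_forall fun t => ?_)).1
    ((harmonicAt_axialForm_sub_axialForm_sub (L := L) (e := e) (ε := ε) (A := A) hF (F t₀)).sub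
      (harmonicAt_comp_analyticAt hH ((L.analyticAt _).comp hF)))
  simp only [barrier, Pi.sub_apply, Function.comp_apply]
  ring

lemma eventually_lt_circleAverage_barrier (hε : 0 < ε) (hLe : L e = 1) {F : ℂ → E}
    (hF : AnalyticAt ℂ F 0) (hF' : HasDerivAt F e 0) (hH : HarmonicAt H (L (F 0))) :
    ∀ᶠ τ in 𝓝[>] (0 : ℝ), barrier H L e ε A (F 0) <
      Real.circleAverage (fun t => barrier H L e ε A (F t)) 0 τ := by
  let G : ℂ → ℝ := fun t => axialForm L e ε A (F t - F 0)
  have hharm : HarmonicAt (fun t => barrier H L e ε A (F t) - G t) 0 :=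
    harmonicAt_barrier_sub_axialForm_sub hF hH
  obtain ⟨ρ, hρ, hball⟩ := Metric.eventually_nhds_iff_ball.1 (hharm.eventually.and
    (hF.eventually_continuousAt.and
      (eventually_nhdsWithin_iff.1 (eventually_le_axialForm_sub (A := A) hε hLe hF'))))
  filter_upwards [Ioo_mem_nhdsGT hρ] with τ hτ
  have hτρ : closedBall (0 : ℂ) |τ| ⊆ ball 0 ρ := by
    rw [abs_of_pos hτ.1]
    exact closedBall_subset_ball hτ.2
  have hG : ContinuousOn G (sphere 0 |τ|) := fun t ht =>
    (continuous_axialForm.continuousAt.comp ((hball t (hτρ (sphere_subset_closedBall ht))).2.1.sub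
      continuousAt_const)).continuousWithinAt
  have hGavg : ε / 2 * τ ^ 2 ≤ Real.circleAverage G 0 τ := by
    rw [← Real.circleAverage_const (ε / 2 * τ ^ 2) (0 : ℂ) τ]
    refine Real.circleAverage_mono (circleIntegrable_const _ _ _) hG.circleIntegrable'
      fun t ht => ?_
    have ht' : ‖t‖ = |τ| := by simpa using ht
    have hle := (hball t (hτρ (sphere_subset_closedBall ht))).2.2
      (norm_ne_zero_iff.1 (ht'.trans_ne (abs_ne_zero.2 hτ.1.ne')))
    rwa [ht', sq_abs] at hle
  have hmean : Real.circleAverage (fun t => barrier H L e ε A (F t) - G t) 0 τ =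
      barrier H L e ε A (F 0) := by
    rw [InnerProductSpace.HarmonicOnNhd.circleAverage_eq fun t ht => (hball t (hτρ ht)).1]
    simp [G, axialForm]
  calc barrier H L e ε A (F 0)
      < Real.circleAverage (fun t => barrier H L e ε A (F t) - G t) 0 τ
          + Real.circleAverage G 0 τ := by
        rw [hmean]
        linarith [mul_pos (half_pos hε) (pow_pos hτ.1 2)]
    _ = Real.circleAverage (fun t => barrier H L e ε A (F t)) 0 τ := by
        rw [← Real.circleAverage_fun_add (ContinuousOn.circleIntegrable' fun t ht =>
          (hball t (hτρ (sphere_subset_closedBall ht))).1.1.continuousAt.continuousWithinAt)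
          hG.circleIntegrable']
        simp only [sub_add_cancel]

lemma exists_tube_subset {Ω : Set E} (hΩ : IsOpen Ω) {u : E → EReal}
    (hu : UpperSemicontinuousOn u Ω) {K : Set ℂ} (hK : IsCompact K) (hKΩ : ∀ w ∈ K, w • e ∈ Ω)
    (hH : ∀ w ∈ K, ContinuousAt H w) (hbd : ∀ w ∈ frontier K, u (w • e) ≤ H w) {δ : ℝ}
    (hδ : 0 < δ) :
    ∃ κ > 0, ∀ y : E, ‖y‖ ≤ κ →
      (∀ w ∈ K, w • e + y ∈ Ω) ∧ ∀ w ∈ frontier K, u (w • e + y) < (H w + δ : ℝ) := by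
  have hlim : ∀ w : ℂ, Tendsto (fun q : E × ℂ => q.2 • e + q.1) (𝓝 (0, w)) (𝓝 (w • e)) :=
    fun w => Continuous.tendsto' (by fun_prop) _ _ (by simp)
  have hmem : ∀ᶠ y in 𝓝 (0 : E), ∀ w ∈ K, w • e + y ∈ Ω :=
    hK.eventually_forall_of_forall_eventually fun w hw =>
      (hlim w).eventually (hΩ.mem_nhds (hKΩ w hw))
  have hlt : ∀ᶠ y in 𝓝 (0 : E), ∀ w ∈ frontier K, u (w • e + y) < (H w + δ : ℝ) := by
    refine (hK.of_isClosed_subset isClosed_frontier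
      hK.isClosed.frontier_subset).eventually_forall_of_forall_eventually fun w hw => ?_
    have hwK : w ∈ K := hK.isClosed.frontier_subset hw
    have husc : ∀ᶠ ζ in 𝓝 (w • e), u ζ < (H w + δ / 2 : ℝ) := by
      have h := hu _ (hKΩ w hwK) _ ((hbd w hw).trans_lt
        (EReal.coe_lt_coe_iff.2 (lt_add_of_pos_right (H w) (half_pos hδ))))
      rwa [hΩ.nhdsWithin_eq (hKΩ w hwK)] at h
    have hHw : ∀ᶠ w' in 𝓝 w, H w - δ / 2 < H w' :=
      (hH w hwK).eventually (lt_mem_nhds (by linarith))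
    filter_upwards [(hlim w).eventually husc, (continuous_snd.tendsto _).eventually hHw]
      with q hq hHq
    exact hq.trans_le (EReal.coe_le_coe_iff.2 (by linarith))
  obtain ⟨κ, hκ, hball⟩ := Metric.nhds_basis_closedBall.eventually_iff.1 (hmem.and hlt)
  exact ⟨κ, hκ, fun y hy => hball (by simpa using hy)⟩

/-- The points whose projection to `ℂ ∙ e` along the kernel of `L` lies over `K`, at distance at
most `κ` from it. -/
def tube (L : E →L[ℂ] ℂ) (e : E) (K : Set ℂ) (κ : ℝ) : Set E :=
  {ζ | L ζ ∈ K ∧ ‖ζ - L ζ • e‖ ≤ κ}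

variable {K : Set ℂ} {κ : ℝ}

lemma isCompact_tube [FiniteDimensional ℂ E] (hK : IsCompact K) : IsCompact (tube L e K κ) := by
  have := FiniteDimensional.proper ℂ E
  have hdist : Continuous fun ξ => ‖ξ - L ξ • e‖ := by fun_prop
  exact ((hK.prod (isCompact_closedBall (0 : E) κ)).image
    (f := fun q : ℂ × E => q.1 • e + q.2) (by fun_prop)).of_isClosed_subset
    ((hK.isClosed.preimage L.continuous).inter (isClosed_le hdist continuous_const))
    fun ζ hζ => ⟨(L ζ, ζ - L ζ • e), ⟨hζ.1, by simpa using hζ.2⟩, by simp⟩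

lemma tube_mem_nhds {ζ : E} (hζ : L ζ ∈ interior K) (hκ : ‖ζ - L ζ • e‖ < κ) :
    tube L e K κ ∈ 𝓝 ζ := by
  have hdist : Continuous fun ξ => ‖ξ - L ξ • e‖ := by fun_prop
  filter_upwards [L.continuous.continuousAt (mem_interior_iff_mem_nhds.1 hζ),
    (hdist.tendsto ζ).eventually (gt_mem_nhds hκ)] with ξ hK hlt using ⟨hK, hlt.le⟩

lemma upperSemicontinuousOn_add_coe {X : Type*} [TopologicalSpace X] {u : X → EReal} {h : X → ℝ}
    {s : Set X} (hu : UpperSemicontinuousOn u s) (hh : ContinuousOn h s) :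
    UpperSemicontinuousOn (fun x => u x + (h x : EReal)) s :=
  hu.add' (continuous_coe_real_ereal.comp_continuousOn hh).upperSemicontinuousOn fun _ _ =>
    EReal.continuousAt_add (.inr (EReal.coe_ne_bot _)) (.inr (EReal.coe_ne_top _))

lemma exists_forall_le_coe_of_isCompact {X : Type*} [TopologicalSpace X] {u : X → EReal} {s : Set X}
    (hs : IsCompact s) (hu : UpperSemicontinuousOn u s) (htop : ∀ x ∈ s, u x < ⊤) :
    ∃ M : ℝ, ∀ x ∈ s, u x ≤ M := by
  rcases s.eq_empty_or_nonempty with rfl | hne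
  · simp
  obtain ⟨x, hx, hmax⟩ := hu.exists_isMaxOn hne hs
  obtain ⟨M, hM, -⟩ := EReal.lt_iff_exists_real_btwn.1 (htop x hx)
  exact ⟨M, fun y hy => (hmax hy).trans hM.le⟩

lemma add_barrier_le_of_le_add {v : EReal} {ζ : E} {δ ρ : ℝ} (hv : v ≤ (H (L ζ) + δ : ℝ))
    (hε : 0 ≤ ε) (hA : 0 ≤ A) (hζ : ‖L ζ‖ ≤ ρ) :
    v + (barrier H L e ε A ζ : EReal) ≤ (δ + ε * ρ ^ 2 : ℝ) := by
  have hform : axialForm L e ε A ζ ≤ ε * ρ ^ 2 :=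
    (sub_le_self _ (by positivity)).trans (by gcongr)
  refine (add_le_add_left hv _).trans ?_
  rw [← EReal.coe_add, EReal.coe_le_coe_iff, barrier]
  linarith

lemma add_barrier_le_sub {v : EReal} {ζ : E} {M : ℝ}
    (hv : v + (barrier H L e ε 0 ζ : EReal) ≤ M) :
    v + (barrier H L e ε A ζ : EReal) ≤ (M - A * ‖ζ - L ζ • e‖ ^ 2 : ℝ) := by
  have hsplit : barrier H L e ε A ζ = barrier H L e ε 0 ζ - A * ‖ζ - L ζ • e‖ ^ 2 := by
    simp only [barrier, axialForm]
    ring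
  rw [hsplit, sub_eq_add_neg, EReal.coe_add, ← add_assoc, sub_eq_add_neg M, EReal.coe_add]
  exact add_le_add_left hv _

lemma add_lt_add_barrier_smul {v : EReal} {w : ℂ} {M : ℝ} (hε : 0 ≤ ε) (hLe : L e = 1)
    (hv : (H w + M : ℝ) < v) : (M : EReal) < v + (barrier H L e ε A (w • e) : EReal) := by
  refine lt_of_le_of_lt ?_ (EReal.add_lt_add_right_coe hv _)
  rw [← EReal.coe_add, EReal.coe_le_coe_iff, barrier, axialForm_smul, axialForm_direction hLe,
    map_smul, hLe, smul_eq_mul, mul_one]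
  linarith [mul_nonneg (sq_nonneg ‖w‖) hε]

lemma exists_isLocalMax_add_barrier_of_tube [FiniteDimensional ℂ E] {u : E → EReal}
    (hu : UpperSemicontinuousOn u (tube L e K κ)) (htop : ∀ ζ ∈ tube L e K κ, u ζ < ⊤)
    (hLe : L e = 1) (hK : IsCompact K) (hκ : 0 < κ) (hH : ∀ w ∈ K, ContinuousAt H w) {δ ρ : ℝ}
    (hδ : 0 ≤ δ) (hKρ : ∀ w ∈ K, ‖w‖ ≤ ρ) (hε : 0 ≤ ε)
    (hbd : ∀ ζ ∈ tube L e K κ, L ζ ∈ frontier K → u ζ ≤ (H (L ζ) + δ : ℝ)) {w₀ : ℂ} (hw₀ : w₀ ∈ K)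
    (hlt : (H w₀ + (δ + ε * ρ ^ 2) : ℝ) < u (w₀ • e)) :
    ∃ A : ℝ, ∃ ζ ∈ tube L e K κ, u ζ ≠ ⊥ ∧
      IsLocalMax (fun ξ => u ξ + (barrier H L e ε A ξ : EReal)) ζ := by
  have husc : ∀ A, UpperSemicontinuousOn (fun ζ => u ζ + (barrier H L e ε A ζ : EReal))
      (tube L e K κ) := fun A => upperSemicontinuousOn_add_coe hu fun ζ hζ =>
    (continuousAt_barrier (hH _ hζ.1)).continuousWithinAt
  obtain ⟨M, hM⟩ := exists_forall_le_coe_of_isCompact (isCompact_tube hK) (husc 0) fun ζ hζ =>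
    EReal.add_lt_top (htop ζ hζ).ne (EReal.coe_ne_top _)
  obtain ⟨A, hA, hAM⟩ : ∃ A ≥ 0, A * κ ^ 2 = |M| :=
    ⟨|M| / κ ^ 2, by positivity, div_mul_cancel₀ _ (by positivity)⟩
  have hw₀T : w₀ • e ∈ tube L e K κ := by simpa [tube, hLe, hκ.le] using hw₀
  obtain ⟨ζ, hζ, hmax⟩ := (husc A).exists_isMaxOn ⟨_, hw₀T⟩ (isCompact_tube hK)
  have hbig : ((δ + ε * ρ ^ 2 : ℝ) : EReal) < u ζ + (barrier H L e ε A ζ : EReal) :=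
    (add_lt_add_barrier_smul hε hLe hlt).trans_le (hmax hw₀T)
  have hint : L ζ ∈ interior K := by
    by_contra hnot
    exact hbig.not_ge
      (add_barrier_le_of_le_add (hbd ζ hζ ⟨subset_closure hζ.1, hnot⟩) hε hA (hKρ _ hζ.1))
  have hdist : ‖ζ - L ζ • e‖ < κ := by
    refine hζ.2.lt_of_ne fun heq => ?_
    have hle := hbig.trans_le (add_barrier_le_sub (hM ζ hζ))
    rw [EReal.coe_lt_coe_iff, heq, hAM] at hle
    linarith [le_abs_self M, mul_nonneg hε (sq_nonneg ρ)]
  refine ⟨A, ζ, hζ, fun hbot => ?_, hmax.isLocalMax (tube_mem_nhds hint hdist)⟩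
  simp [hbot] at hbig

lemma exists_isLocalMax_add_barrier [FiniteDimensional ℂ E] {Ω : Set E} (hΩ : IsOpen Ω)
    {u : E → EReal} (hu : UpperSemicontinuousOn u Ω) (htop : ∀ ζ ∈ Ω, u ζ < ⊤) (hLe : L e = 1)
    (hK : IsCompact K) (hKΩ : ∀ w ∈ K, w • e ∈ Ω) (hH : ∀ w ∈ K, ContinuousAt H w)
    (hbd : ∀ w ∈ frontier K, u (w • e) ≤ H w) {w₀ : ℂ} (hw₀ : w₀ ∈ K)
    (hlt : (H w₀ : EReal) < u (w₀ • e)) :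
    ∃ ε > 0, ∃ A : ℝ, ∃ ζ ∈ Ω, L ζ ∈ K ∧ u ζ ≠ ⊥ ∧
      IsLocalMax (fun ξ => u ξ + (barrier H L e ε A ξ : EReal)) ζ := by
  obtain ⟨c, hHc, hcu⟩ := EReal.lt_iff_exists_real_btwn.1 hlt
  obtain ⟨δ, hδ, hδc⟩ : ∃ δ > 0, H w₀ + (δ + δ) = c :=
    ⟨(c - H w₀) / 2, half_pos (sub_pos.2 (EReal.coe_lt_coe_iff.1 hHc)), by ring⟩
  obtain ⟨κ, hκ, htube⟩ := exists_tube_subset hΩ hu hK hKΩ hH hbd hδ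
  obtain ⟨ρ, hρ, hKρ⟩ := hK.isBounded.subset_closedBall_lt 0 0
  obtain ⟨ε, hε, hερ⟩ : ∃ ε > 0, ε * ρ ^ 2 = δ :=
    ⟨δ / ρ ^ 2, by positivity, div_mul_cancel₀ _ (by positivity)⟩
  have hTΩ : tube L e K κ ⊆ Ω := fun ζ hζ => by
    simpa using (htube (ζ - L ζ • e) hζ.2).1 (L ζ) hζ.1
  have hfr : ∀ ζ ∈ tube L e K κ, L ζ ∈ frontier K → u ζ ≤ (H (L ζ) + δ : ℝ) := fun ζ hζ hLζ => by
    simpa using ((htube (ζ - L ζ • e) hζ.2).2 (L ζ) hLζ).le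
  obtain ⟨A, ζ, hζ, hbot, hmax⟩ := exists_isLocalMax_add_barrier_of_tube (hu.mono hTΩ)
    (fun ζ hζ => htop ζ (hTΩ hζ)) hLe hK hκ hH hδ.le
    (fun w hw => mem_closedBall_zero_iff.1 (hKρ hw)) hε.le hfr hw₀ (by rwa [hερ, hδc])
  exact ⟨ε, hε, A, ζ, hTΩ hζ, hζ.1, hbot, hmax⟩

lemma exists_curve_map_to_line [FiniteDimensional ℂ E] {g : E → E} {Ω : Set E} (hΩ : IsOpen Ω)
    (hg : DifferentiableOn ℂ g Ω) (hinj : InjOn g Ω) {ζ : E} (hζ : ζ ∈ Ω) (e : E) :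
    ∃ (F : ℂ → E) (b : E), F 0 = ζ ∧ AnalyticAt ℂ F 0 ∧ HasDerivAt F e 0 ∧
      ∀ᶠ t in 𝓝 0, F t ∈ Ω ∧ g (F t) = g ζ + t • b := by
  have := FiniteDimensional.complete ℂ E
  obtain ⟨g', hg'⟩ := exists_hasFDerivAt_equiv_of_injOn hΩ hg hinj hζ
  obtain ⟨f, V, hV, hζV, hfΩ, hf, hgf, hfg, hf'⟩ :=
    exists_differentiableOn_localInverse hΩ hg hζ hg'
  have hVt : {t : ℂ | g ζ + t • g' e ∈ V} ∈ 𝓝 0 :=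
    (hV.preimage (by fun_prop : Continuous fun t : ℂ => g ζ + t • g' e)).mem_nhds
      (by simpa using hζV)
  have hderiv := hasDerivAt_comp_add_smul (f := f) (x := g ζ) (b := g' e) (t := 0)
    (by simpa using hf'.differentiableAt)
  refine ⟨fun t => f (g ζ + t • g' e), g' e, by simpa using hfg.self_of_nhds,
    (differentiableOn_comp_add_smul hf (g ζ) (g' e)).analyticAt hVt,
    by simpa [hf'.fderiv] using hderiv, ?_⟩
  filter_upwards [hVt] with t ht using ⟨hfΩ ht, hgf ht⟩

/-- Subharmonicity of `v` in the sense of F. Riesz: on compact sets, `v` is dominated by every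
harmonic function which dominates it on the frontier. -/
def SubharmonicOn (v : ℂ → EReal) (Ω : Set ℂ) : Prop :=
  UpperSemicontinuousOn v Ω ∧ ∀ K ⊆ Ω, IsCompact K → ∀ H : ℂ → ℝ, HarmonicOnNhd H K →
    (∀ w ∈ frontier K, v w ≤ H w) → ∀ w ∈ K, v w ≤ H w

variable {n : ℕ} {φ : Cn n → EReal} {D : Set (Cn n)}

lemma PSHOn.circleAverage_le (hφ : PSHOn φ D) {a b : Cn n} (hbot : φ a ≠ ⊥) (htop : φ a ≠ ⊤)
    {τ : ℝ} (hτ : 0 < τ) (hdisc : ∀ t : ℂ, ‖t‖ ≤ τ → a + t • b ∈ D) {Q : ℂ → ℝ}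
    (hQ : ContinuousOn Q (sphere 0 τ)) {q : ℝ}
    (hmax : ∀ t ∈ sphere (0 : ℂ) τ, φ (a + t • b) + Q t ≤ φ a + q) :
    Real.circleAverage Q 0 τ ≤ q := by
  obtain ⟨m, hm⟩ : ∃ m : ℝ, φ a = m := ⟨_, (EReal.coe_toReal htop hbot).symm⟩
  have hcircle : ∀ θ, circleMap 0 τ θ ∈ sphere (0 : ℂ) τ := circleMap_mem_sphere 0 hτ.le
  have hcont : Continuous fun θ => Q (circleMap 0 τ θ) :=
    hQ.comp_continuous (continuous_circleMap 0 τ) hcircle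
  have hmean := hφ.2 a (by simpa using hdisc 0 (by simpa using hτ.le)) b τ hτ hdisc
    (fun θ => m + q - Q (circleMap 0 τ θ)) (continuous_const.sub hcont) fun θ => by
      have h := hmax _ (hcircle θ)
      rw [hm, ← EReal.coe_add] at h
      rw [circleMap_zero] at h ⊢
      rw [EReal.coe_sub]
      exact (EReal.le_sub_iff_add_le (.inl (EReal.coe_ne_bot _)) (.inl (EReal.coe_ne_top _))).2 h
  rw [hm, EReal.coe_le_coe_iff, intervalIntegral.integral_sub (by simp)
    (hcont.intervalIntegrable _ _), intervalIntegral.integral_const] at hmean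
  rw [Real.circleAverage_def]
  simp only [sub_zero, smul_eq_mul, one_div, mul_sub] at hmean ⊢
  rw [inv_mul_cancel_left₀ (by positivity)] at hmean
  linarith

variable {Ω : Set (Cn n)} {g : Cn n → Cn n} {L : Cn n →L[ℂ] ℂ} {e : Cn n}

lemma PSHOn.not_isLocalMax_add_barrier (hφ : PSHOn φ D) (hΩ : IsOpen Ω)
    (hg : DifferentiableOn ℂ g Ω) (hinj : InjOn g Ω) (hgD : MapsTo g Ω D)
    {ζ : Cn n} (hζ : ζ ∈ Ω) (hbot : φ (g ζ) ≠ ⊥) (htop : φ (g ζ) ≠ ⊤) (hH : HarmonicAt H (L ζ))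
    (hε : 0 < ε) (hLe : L e = 1) :
    ¬ IsLocalMax (fun ξ => φ (g ξ) + (barrier H L e ε A ξ : EReal)) ζ := by
  intro hmax
  obtain ⟨F, b, rfl, hF, hF', hFΩ⟩ := exists_curve_map_to_line hΩ hg hinj hζ e
  have hcont : ∀ᶠ t in 𝓝 (0 : ℂ), ContinuousAt (fun t => barrier H L e ε A (F t)) t := by
    have hLF := (L.continuous.continuousAt.comp hF.continuousAt).tendsto
    filter_upwards [hF.eventually_continuousAt, hLF.eventually hH.eventually] with t ht hHt
    exact (continuousAt_barrier hHt.1.continuousAt).comp ht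
  obtain ⟨ρ, hρ, hball⟩ := Metric.eventually_nhds_iff_ball.1
    (hFΩ.and (hcont.and (hF.continuousAt.eventually hmax)))
  obtain ⟨τ, hlt, hτ⟩ := ((eventually_lt_circleAverage_barrier (A := A) hε hLe hF hF' hH).and
    (Ioo_mem_nhdsGT hρ)).exists
  have hτρ : ∀ t : ℂ, ‖t‖ ≤ τ → t ∈ ball (0 : ℂ) ρ := fun t ht => by
    simpa using ht.trans_lt hτ.2
  have hsphere : ∀ t ∈ sphere (0 : ℂ) τ, t ∈ ball (0 : ℂ) ρ := fun t ht =>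
    hτρ t (mem_sphere_zero_iff_norm.1 ht).le
  refine hlt.not_ge (hφ.circleAverage_le hbot htop (b := b) hτ.1 (fun t ht => ?_)
    (fun t ht => (hball t (hsphere t ht)).2.1.continuousWithinAt) fun t ht => ?_)
  · obtain ⟨⟨hFt, hgF⟩, -⟩ := hball t (hτρ t ht)
    exact hgF ▸ hgD hFt
  · obtain ⟨⟨-, hgF⟩, -, hle⟩ := hball t (hsphere t ht)
    exact hgF ▸ hle

theorem PSHOn.subharmonicOn_comp_smul (hφ : PSHOn φ D) (htop : ∀ x ∈ D, φ x < ⊤) (hΩ : IsOpen Ω)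
    (hg : DifferentiableOn ℂ g Ω) (hinj : InjOn g Ω) (hgD : MapsTo g Ω D) (he : e ≠ 0) :
    SubharmonicOn (fun w => φ (g (w • e))) {w | w • e ∈ Ω} := by
  have hu : UpperSemicontinuousOn (fun ζ => φ (g ζ)) Ω :=
    hφ.1.comp hg.continuousOn hgD
  refine ⟨hu.comp (g := fun w : ℂ => w • e) (by fun_prop) fun w hw => hw,
    fun K hKΩ hK H hH hbd w₀ hw₀ => ?_⟩
  obtain ⟨L, hLe⟩ := SeparatingDual.exists_eq_one (R := ℂ) he
  by_contra! hlt
  obtain ⟨ε, hε, A, ζ, hζ, hζK, hbot, hmax⟩ := exists_isLocalMax_add_barrier hΩ hu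
    (fun ζ hζ => htop _ (hgD hζ)) hLe hK hKΩ (fun w hw => (hH w hw).1.continuousAt) hbd hw₀ hlt
  exact hφ.not_isLocalMax_add_barrier hΩ hg hinj hgD hζ hbot (htop _ (hgD hζ)).ne (hH _ hζK) hε hLe
    hmax

end Subharmonic

section Beurling

lemma factorial_add_le (m k : ℕ) :
    (m + k).factorial ≤ 2 ^ (m + k) * (m.factorial * k.factorial) := by
  rw [← Nat.add_choose_mul_factorial_mul_factorial m k, mul_assoc]
  exact Nat.mul_le_mul_right _ (Nat.choose_le_two_pow _ _)

lemma pow_mul_factorial_le_prod {a : ℕ → ℝ} {d : ℝ} (hd : 0 ≤ d) {k : ℕ}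
    (ha : ∀ j < k, d * (j + 1) ≤ a j) : d ^ k * k.factorial ≤ ∏ j ∈ Finset.range k, a j := by
  rw [← Finset.prod_range_add_one_eq_factorial, Nat.cast_prod, Finset.pow_eq_prod_const,
    ← Finset.prod_mul_distrib]
  refine Finset.prod_le_prod (fun j _ => by positivity) fun j hj => ?_
  exact_mod_cast ha j (Finset.mem_range.1 hj)

lemma factorial_mul_pow_le_prod_dist {X : Type*} [PseudoMetricSpace X] {l : ℕ → X} {N : ℕ}
    {d η : ℝ} (hd : 0 ≤ d) (hη : 0 ≤ η)
    (hsep : ∀ i ∈ Finset.range (N + 1), ∀ j ∈ Finset.range (N + 1),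
      d * |(i : ℝ) - j| ≤ dist (l i) (l j))
    {w : X} (hw : ∀ j ∈ Finset.range (N + 1), η ≤ dist w (l j)) :
    η * (d / 4) ^ N * N.factorial ≤ ∏ j ∈ Finset.range (N + 1), dist w (l j) := by
  obtain ⟨m, hm, hmin⟩ := Finset.exists_min_image (Finset.range (N + 1)) (fun j => dist w (l j))
    Finset.nonempty_range_add_one
  -- `l m` is the node nearest to `w`, so `dist (l m) (l j) ≤ 2 * dist w (l j)`.
  have hdist : ∀ j ∈ Finset.range (N + 1), d / 2 * |(m : ℝ) - j| ≤ dist w (l j) := fun j hj => by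
    have htri := dist_triangle_left (l m) (l j) w
    linarith [hsep m hm j hj, hmin j hj]
  obtain ⟨k, rfl⟩ := Nat.exists_eq_add_of_le (Finset.mem_range_succ_iff.1 hm)
  have hleft : (d / 2) ^ m * m.factorial ≤ ∏ j ∈ Finset.range m, dist w (l j) := by
    rw [← Finset.prod_range_reflect]
    refine pow_mul_factorial_le_prod (by positivity) fun j hj => ?_
    have h := hdist (m - 1 - j) (Finset.mem_range.2 (by omega))
    have hcast : ((m - 1 - j : ℕ) : ℝ) = m - (j + 1) := by
      rw [Nat.sub_sub, add_comm 1 j, Nat.cast_sub (by omega), Nat.cast_add_one]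
    rwa [hcast, sub_sub_cancel, abs_of_nonneg (by positivity)] at h
  have hright : (d / 2) ^ k * k.factorial ≤ ∏ j ∈ Finset.range k, dist w (l (m + 1 + j)) := by
    refine pow_mul_factorial_le_prod (by positivity) fun j hj => ?_
    have h := hdist (m + 1 + j) (Finset.mem_range.2 (by omega))
    have hcast : (m : ℝ) - (m + 1 + j : ℕ) = -(j + 1) := by
      push_cast
      ring
    rwa [hcast, abs_neg, abs_of_nonneg (by positivity)] at h
  calc η * (d / 4) ^ (m + k) * (m + k).factorial
      ≤ η * (d / 4) ^ (m + k) * (2 ^ (m + k) * (m.factorial * k.factorial)) := by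
        gcongr
        exact_mod_cast factorial_add_le m k
    _ = (d / 2) ^ m * m.factorial * η * ((d / 2) ^ k * k.factorial) := by
        rw [show d / 4 = d / 2 / 2 by ring, div_pow (d / 2), pow_add (d / 2)]
        field_simp
    _ ≤ (∏ j ∈ Finset.range m, dist w (l j)) * dist w (l m) *
          ∏ j ∈ Finset.range k, dist w (l (m + 1 + j)) := by
        gcongr
        exact hw m hm
    _ = ∏ j ∈ Finset.range (m + k + 1), dist w (l j) := by
        rw [add_right_comm, Finset.prod_range_add, Finset.prod_range_succ]

lemma pow_div_exp_le_factorial (N : ℕ) : (N / Real.exp 1) ^ N ≤ N.factorial := by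
  have h := Real.pow_div_factorial_le_exp (N : ℝ) N.cast_nonneg N
  rw [div_le_iff₀ (by positivity), mul_comm] at h
  rwa [div_pow, div_le_iff₀ (by positivity), ← Real.exp_nat_mul, mul_one]

open Complex in
lemma norm_canonicalFactor_le {R : ℝ} {l w : ℂ} (hl : ‖l‖ ≤ R) (hw : ‖w‖ ≤ R) :
    ‖canonicalFactor R l w‖ ≤ 2 * R / dist w l := by
  have hR : 0 ≤ R := (norm_nonneg l).trans hl
  rcases hR.eq_or_lt with rfl | hR
  · simp [canonicalFactor_apply]
  rw [canonicalFactor_apply, norm_div, norm_mul, norm_real, Real.norm_of_nonneg hR.le, dist_eq_norm,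
    ← div_div]
  gcongr
  rw [div_le_iff₀ hR]
  calc ‖(R : ℂ) ^ 2 - starRingEnd ℂ l * w‖
      ≤ ‖(R : ℂ) ^ 2‖ + ‖starRingEnd ℂ l * w‖ := norm_sub_le _ _
    _ ≤ R ^ 2 + R * R := by
        rw [norm_pow, norm_real, Real.norm_of_nonneg hR.le, norm_mul, RCLike.norm_conj]
        gcongr
    _ = 2 * R * R := by ring

open Complex in
lemma norm_canonicalFactor_zero {R : ℝ} (hR : 0 < R) (l : ℂ) :
    ‖canonicalFactor R l 0‖ = R / ‖l‖ := by
  rw [canonicalFactor_apply]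
  simp only [mul_zero, sub_zero, zero_sub, norm_div, norm_pow, norm_mul, norm_neg, norm_real,
    Real.norm_of_nonneg hR.le]
  rw [sq, mul_div_mul_left _ _ hR.ne']

open Complex InnerProductSpace in
lemma SubharmonicOn.apply_zero_le {v : ℂ → EReal} {Ω : Set ℂ} (hv : SubharmonicOn v Ω) {R : ℝ}
    (hRΩ : closedBall 0 R ⊆ Ω) (hv0 : ∀ w ∈ sphere (0 : ℂ) R, v w ≤ 0) {ι : Type*} {s : Finset ι}
    {l : ι → ℂ} {η c k : ℝ} (hη : 0 < η) (hlη : ∀ j ∈ s, η ≤ ‖l j‖) (hlR : ∀ j ∈ s, ‖l j‖ < R)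
    (hR : 0 ≤ R)
    (hvc : ∀ j ∈ s, ∀ w ∈ sphere (l j) η, v w ≤ (-c : ℝ))
    (hk : ∀ w ∈ closedBall (0 : ℂ) R, (∀ j ∈ s, η ≤ dist w (l j)) →
      k * Real.log ‖∏ j ∈ s, canonicalFactor R (l j) w‖ ≤ c) :
    v 0 ≤ (-(k * Real.log ‖∏ j ∈ s, canonicalFactor R (l j) 0‖) : ℝ) := by
  let K : Set ℂ := closedBall 0 R \ ⋃ j ∈ s, ball (l j) η
  have hmem : ∀ {w}, w ∈ K ↔ w ∈ closedBall 0 R ∧ ∀ j ∈ s, η ≤ dist w (l j) := by simp [K]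
  have hKclosed : IsClosed K :=
    isClosed_closedBall.sdiff (isOpen_biUnion fun _ _ => isOpen_ball)
  refine hv.2 K (sdiff_subset.trans hRΩ)
    ((isCompact_closedBall 0 R).of_isClosed_subset hKclosed sdiff_subset)
    (fun w => -(k * Real.log ‖∏ j ∈ s, canonicalFactor R (l j) w‖)) (fun w hw => ?_)
    (fun w hw => ?_) 0 (hmem.2 ⟨by simpa using hR, fun j hj => by simpa using hlη j hj⟩)
  · have hne : ∀ j ∈ s, w ≠ l j := fun j hj =>
      dist_pos.1 (hη.trans_le ((hmem.1 hw).2 j hj))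
    have hlog := (Finset.analyticAt_fun_prod s fun j hj => analyticOnNhd_canonicalFactor R (l j) w
      (hne j hj)).harmonicAt_log_norm (Finset.prod_ne_zero_iff.2 fun j hj =>
        canonicalFactor_ne_zero (by simpa using hlR j hj) (hmem.1 hw).1 (hne j hj))
    exact (hlog.const_smul (c := k)).neg
  · obtain ⟨hwR, hwη⟩ := hmem.1 (hKclosed.frontier_subset hw)
    by_cases hsphere : w ∈ sphere 0 R
    · have hone : ‖∏ j ∈ s, canonicalFactor R (l j) w‖ = 1 := by
        rw [norm_prod]
        exact Finset.prod_eq_one fun j hj =>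
          norm_canonicalFactor_eval_circle_eq_one (by simpa using hlR j hj) hsphere
      simpa [hone] using hv0 w hsphere
    obtain ⟨j, hj, hwj⟩ : ∃ j ∈ s, dist w (l j) = η := by
      by_contra! hne
      refine hw.2 (mem_interior_iff_mem_nhds.2 ?_)
      filter_upwards [isOpen_ball.mem_nhds (mem_ball.2 (hwR.lt_of_ne hsphere)),
        (Filter.eventually_all_finset s).2 fun j hj =>
          ((continuous_id.dist continuous_const).tendsto w).eventually
            (lt_mem_nhds ((hwη j hj).lt_of_ne (hne j hj).symm))] with w' hR' hη'
      exact hmem.2 ⟨ball_subset_closedBall hR', fun j hj => (hη' j hj).le⟩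
    exact (hvc j hj w hwj).trans (EReal.coe_le_coe_iff.2 (neg_le_neg (hk w hwR hwη)))

lemma exists_separated_nodes {E : Set ℂ} {r s : ℝ} (hrs : r ≤ s)
    (hE : ∀ t ∈ Icc r s, ∃ w ∈ E, ‖w‖ = t) {N : ℕ} (hN : N ≠ 0) :
    ∃ l : ℕ → ℂ, (∀ j ∈ Finset.range (N + 1), l j ∈ E ∧ ‖l j‖ ∈ Icc r s) ∧
      ∀ i ∈ Finset.range (N + 1), ∀ j ∈ Finset.range (N + 1),
        (s - r) / N * |(i : ℝ) - j| ≤ dist (l i) (l j) := by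
  have hd : 0 ≤ (s - r) / N := div_nonneg (sub_nonneg.2 hrs) N.cast_nonneg
  have hradius : ∀ j ∈ Finset.range (N + 1), r + (s - r) / N * j ∈ Icc r s := fun j hj => by
    have hjN : (j : ℝ) ≤ N := by exact_mod_cast Finset.mem_range_succ_iff.1 hj
    have hle := mul_le_mul_of_nonneg_left hjN hd
    rw [div_mul_cancel₀ _ (by exact_mod_cast hN)] at hle
    exact ⟨le_add_of_nonneg_right (by positivity), by linarith⟩
  choose! l hlE hlt using hE
  refine ⟨fun j => l (r + (s - r) / N * j), fun j hj => ?_, fun i hi j hj => ?_⟩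
  · rw [hlt _ (hradius j hj)]
    exact ⟨hlE _ (hradius j hj), hradius j hj⟩
  · calc (s - r) / N * |(i : ℝ) - j|
        = |‖l (r + (s - r) / N * i)‖ - ‖l (r + (s - r) / N * j)‖| := by
          rw [hlt _ (hradius i hi), hlt _ (hradius j hj), add_sub_add_left_eq_sub, ← mul_sub,
            abs_mul, abs_of_nonneg hd]
      _ ≤ dist (l (r + (s - r) / N * i)) (l (r + (s - r) / N * j)) := by
          rw [dist_eq_norm]
          exact abs_norm_sub_norm_le _ _

open Complex in
lemma norm_prod_canonicalFactor_le {l : ℕ → ℂ} {N : ℕ} (hN : N ≠ 0) {a η R : ℝ} (ha : 0 < a)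
    (hη : 0 < η) (hR : 0 ≤ R)
    (hsep : ∀ i ∈ Finset.range (N + 1), ∀ j ∈ Finset.range (N + 1),
      a / N * |(i : ℝ) - j| ≤ dist (l i) (l j))
    (hlR : ∀ j ∈ Finset.range (N + 1), ‖l j‖ ≤ R) {w : ℂ} (hw : w ∈ closedBall 0 R)
    (hwη : ∀ j ∈ Finset.range (N + 1), η ≤ dist w (l j)) :
    ‖∏ j ∈ Finset.range (N + 1), canonicalFactor R (l j) w‖ ≤
      (2 * R) ^ (N + 1) / (η * (a / (4 * Real.exp 1)) ^ N) := by
  have hN0 : (N : ℝ) ≠ 0 := by exact_mod_cast hN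
  have hdist : η * (a / (4 * Real.exp 1)) ^ N ≤ ∏ j ∈ Finset.range (N + 1), dist w (l j) :=
    calc η * (a / (4 * Real.exp 1)) ^ N
        = η * (a / N / 4) ^ N * (N / Real.exp 1) ^ N := by
          rw [mul_assoc, ← mul_pow]
          congr 2
          field_simp
      _ ≤ η * (a / N / 4) ^ N * N.factorial := by
          gcongr
          exact pow_div_exp_le_factorial N
      _ ≤ _ := factorial_mul_pow_le_prod_dist (by positivity) hη.le hsep hwη
  calc ‖∏ j ∈ Finset.range (N + 1), canonicalFactor R (l j) w‖
      ≤ ∏ j ∈ Finset.range (N + 1), 2 * R / dist w (l j) := by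
        rw [norm_prod]
        exact Finset.prod_le_prod (fun _ _ => norm_nonneg _) fun j hj =>
          norm_canonicalFactor_le (hlR j hj) (by simpa using hw)
    _ = (2 * R) ^ (N + 1) / ∏ j ∈ Finset.range (N + 1), dist w (l j) := by
        rw [Finset.prod_div_distrib, Finset.prod_const, Finset.card_range]
    _ ≤ _ := by gcongr

open Complex in
lemma div_pow_le_norm_prod_canonicalFactor_zero {ι : Type*} {F : Finset ι} {l : ι → ℂ} {R s : ℝ}
    (hR : 0 < R) (hl0 : ∀ j ∈ F, l j ≠ 0) (hls : ∀ j ∈ F, ‖l j‖ ≤ s) :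
    (R / s) ^ F.card ≤ ‖∏ j ∈ F, canonicalFactor R (l j) 0‖ := by
  rw [norm_prod, ← Finset.prod_const]
  have hs : ∀ j ∈ F, 0 ≤ R / s := fun j hj =>
    div_nonneg hR.le ((norm_nonneg _).trans (hls j hj))
  refine Finset.prod_le_prod hs fun j hj => ?_
  rw [norm_canonicalFactor_zero hR]
  exact div_le_div_of_nonneg_left hR.le (norm_pos_iff.2 (hl0 j hj)) (hls j hj)

lemma exists_pow_succ_div_le {R τ η : ℝ} (hτ : 0 < τ) (hη : 0 < η) (hR : 0 ≤ R) :
    ∃ N : ℕ, N ≠ 0 ∧ (2 * R) ^ (N + 1) / (η * τ ^ N) ≤ (4 * R / τ) ^ (N + 1) := by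
  obtain ⟨N, hN⟩ := pow_unbounded_of_one_lt (τ / η) one_lt_two
  refine ⟨N + 1, N.succ_ne_zero, ?_⟩
  have hτN : τ ≤ η * 2 ^ (N + 1 + 1) := by
    have h := (div_lt_iff₀ hη).1
      (hN.trans_le (pow_le_pow_right₀ one_le_two (by omega : N ≤ N + 1 + 1)))
    linarith
  rw [div_le_iff₀ (by positivity)]
  calc (2 * R) ^ (N + 1 + 1) = (2 * R) ^ (N + 1 + 1) / τ * τ := by field_simp
    _ ≤ (2 * R) ^ (N + 1 + 1) / τ * (η * 2 ^ (N + 1 + 1)) := by gcongr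
    _ = (4 * R / τ) ^ (N + 1 + 1) * (η * τ ^ (N + 1)) := by
        rw [show 4 * R = 2 * R * 2 by ring, div_pow, mul_pow (2 * R) 2, pow_succ τ]
        field_simp

lemma exists_forall_mem_closedBall_lt {v : ℂ → EReal} {Ω E : Set ℂ} (hΩ : IsOpen Ω)
    (hv : UpperSemicontinuousOn v Ω) (hE : IsCompact E) (hEΩ : E ⊆ Ω) {c : EReal}
    (hvE : ∀ w ∈ E, v w < c) {r : ℝ} (hr : 0 < r) :
    ∃ η > 0, η ≤ r ∧ ∀ x ∈ E, ∀ w ∈ closedBall x η, v w < c := by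
  have hmem : {w | v w < c} ∈ 𝓝ˢ E := mem_nhdsSet_iff_forall.2 fun x hx => by
    have h := hv x (hEΩ hx) c (hvE x hx)
    rwa [hΩ.nhdsWithin_eq (hEΩ hx)] at h
  obtain ⟨η, hη, hsub⟩ := (hasBasis_nhdsSet_cthickening hE).mem_iff.1 hmem
  exact ⟨min η r, lt_min hη hr, min_le_right _ _, fun x hx w hw => hsub
    (closedBall_subset_cthickening hx η (closedBall_subset_closedBall (min_le_left _ _) hw))⟩

-- A Milloux-type form of Beurling's projection theorem: `δ` depends on neither `v` nor `E`.
theorem exists_forall_subharmonicOn_apply_zero_le {r s R c : ℝ} (hr : 0 < r) (hrs : r < s)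
    (hsR : s < R) (hc : 0 < c) :
    ∃ δ > 0, ∀ {v : ℂ → EReal} {Ω E : Set ℂ}, IsOpen Ω → SubharmonicOn v Ω →
      closedBall 0 R ⊆ Ω → (∀ w ∈ sphere (0 : ℂ) R, v w ≤ 0) → IsCompact E → E ⊆ Ω →
      (∀ w ∈ E, v w < (-c : ℝ)) → (∀ t ∈ Icc r s, ∃ w ∈ E, ‖w‖ = t) → v 0 ≤ (-δ : ℝ) := by
  have hs : 0 < s := hr.trans hrs
  have hR : 0 < R := hs.trans hsR
  have hsr : 0 < s - r := sub_pos.2 hrs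
  let τ : ℝ := (s - r) / (4 * Real.exp 1)
  have hτ : 0 < τ := by positivity
  have hτR : τ < R := by
    have he := Real.exp_one_gt_two
    rw [div_lt_iff₀ (by positivity)]
    nlinarith
  have hlogA : 0 < Real.log (4 * R / τ) := Real.log_pos (by rw [lt_div_iff₀ hτ]; linarith)
  have hlogRs : 0 < Real.log (R / s) := Real.log_pos ((one_lt_div hs).2 hsR)
  refine ⟨c / Real.log (4 * R / τ) * Real.log (R / s), by positivity, ?_⟩
  intro v Ω E hΩ hv hRΩ hv0 hE hEΩ hvE hcircle
  obtain ⟨η, hη, hηr, hvη⟩ := exists_forall_mem_closedBall_lt hΩ hv.1 hE hEΩ hvE hr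
  obtain ⟨N, hN, hNA⟩ := exists_pow_succ_div_le hτ hη hR.le
  obtain ⟨l, hl, hsep⟩ := exists_separated_nodes hrs.le hcircle hN
  let k : ℝ := c / ((N + 1) * Real.log (4 * R / τ))
  have : 0 ≤ k := by positivity
  refine (hv.apply_zero_le hRΩ hv0 (s := Finset.range (N + 1)) (l := l) (c := c) (k := k) hη
    (fun j hj => hηr.trans (hl j hj).2.1) (fun j hj => (hl j hj).2.2.trans_lt hsR) hR.le
    (fun j hj w hw => (hvη _ (hl j hj).1 w (sphere_subset_closedBall hw)).le)
    fun w hw hwη => ?_).trans (EReal.coe_le_coe_iff.2 (neg_le_neg ?_))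
  · have hQ := (norm_prod_canonicalFactor_le hN hsr hη hR.le hsep
      (fun j hj => ((hl j hj).2.2.trans_lt hsR).le) hw hwη).trans hNA
    have hQ0 : 0 < ‖∏ j ∈ Finset.range (N + 1), Complex.canonicalFactor R (l j) w‖ :=
      norm_pos_iff.2 (Finset.prod_ne_zero_iff.2 fun j hj => Complex.canonicalFactor_ne_zero
        (by simpa using (hl j hj).2.2.trans_lt hsR) hw (dist_pos.1 (hη.trans_le (hwη j hj))))
    calc k * Real.log _ ≤ k * ((N + 1) * Real.log (4 * R / τ)) := by
          gcongr
          exact (Real.log_le_log hQ0 hQ).trans_eq (by rw [Real.log_pow]; push_cast; rfl)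
      _ = c := div_mul_cancel₀ _ (by positivity)
  · have hQ := div_pow_le_norm_prod_canonicalFactor_zero hR
      (fun j hj => norm_pos_iff.1 (hr.trans_le (hl j hj).2.1)) fun j hj => (hl j hj).2.2
    rw [Finset.card_range] at hQ
    calc c / Real.log (4 * R / τ) * Real.log (R / s)
        = k * ((N + 1) * Real.log (R / s)) := by simp only [k]; field_simp
      _ ≤ k * Real.log _ := by
        gcongr
        rw [← Nat.cast_add_one, ← Real.log_pow]
        exact Real.log_le_log (by positivity) hQ

end Beurling

section Localization

lemma exists_norm_eq_dist_le {E : Type*} [NormedAddCommGroup E] [NormedSpace ℂ E] {G : ℂ → E}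
    {t : ℝ} (ht : t ≠ 0) (hG : DiffContOnCl ℂ G (ball 0 t)) {w₀ : ℂ} (hw₀ : w₀ ∈ ball 0 t) (p : E) :
    ∃ w, ‖w‖ = t ∧ dist (G w₀) p ≤ dist (G w) p := by
  obtain ⟨w, hw, hmax⟩ := Complex.exists_mem_frontier_isMaxOn_norm isBounded_ball ⟨w₀, hw₀⟩
    (hG.sub_const p)
  rw [frontier_ball _ ht, mem_sphere_zero_iff_norm] at hw
  refine ⟨w, hw, ?_⟩
  rw [dist_eq_norm, dist_eq_norm]
  exact hmax (subset_closure hw₀)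

lemma isCompact_annulus_le_dist {X : Type*} [PseudoMetricSpace X] {G : ℂ → X} {r s ρ : ℝ} {p : X}
    (hG : ContinuousOn G (closedBall 0 s)) :
    IsCompact {w : ℂ | ‖w‖ ∈ Icc r s ∧ ρ ≤ dist (G w) p} := by
  have hclosed : IsClosed (closedBall 0 s ∩ {w | ρ ≤ dist (G w) p}) :=
    ContinuousOn.preimage_isClosed_of_isClosed (by fun_prop) isClosed_closedBall isClosed_Ici
  have hinter : {w : ℂ | ‖w‖ ∈ Icc r s ∧ ρ ≤ dist (G w) p} =
      {w | r ≤ ‖w‖} ∩ (closedBall 0 s ∩ {w | ρ ≤ dist (G w) p}) := by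
    ext w
    simp only [mem_ofPred_eq, mem_inter_iff, mem_closedBall_zero_iff, mem_Icc, and_assoc]
  rw [hinter]
  exact (isCompact_closedBall (0 : ℂ) s).of_isClosed_subset
    ((isClosed_le continuous_const continuous_norm).inter hclosed) fun w hw => hw.2.1

variable {n : ℕ}

theorem exists_forall_apply_zero_le {r s R c : ℝ} (hr : 0 < r) (hrs : r < s) (hsR : s < R)
    (hc : 0 < c) :
    ∃ δ > 0, ∀ {D : Set (Cn n)} {g : Cn n → Cn n} {φ : Cn n → EReal} {p y : Cn n} {R₀ ρ : ℝ},
      R < R₀ → DifferentiableOn ℂ g (ball 0 R₀) → InjOn g (ball 0 R₀) → MapsTo g (ball 0 R₀) D →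
      PSHOn φ D → (∀ x ∈ D, φ x ≤ 0) → (∀ x ∈ D, ρ ≤ dist x p → φ x < (-c : ℝ)) →
      y ≠ 0 → ‖y‖ < r → ρ ≤ dist (g y) p → φ (g 0) ≤ (-δ : ℝ) := by
  obtain ⟨δ, hδ, hest⟩ := exists_forall_subharmonicOn_apply_zero_le hr hrs hsR hc
  refine ⟨δ, hδ, ?_⟩
  intro D g φ p y R₀ ρ hRR₀ hg hinj hgD hφ hφ0 hφc hy hyr hyp
  set e : Cn n := (‖y‖ : ℂ)⁻¹ • y
  have hy' : (‖y‖ : ℂ) ≠ 0 := by exact_mod_cast norm_ne_zero_iff.2 hy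
  have he : ‖e‖ = 1 := by simpa using norm_smul_inv_norm (𝕜 := ℂ) hy
  have hye : (‖y‖ : ℂ) • e = y := smul_inv_smul₀ hy' y
  have hslice : {w : ℂ | w • e ∈ ball (0 : Cn n) R₀} = ball 0 R₀ := by
    ext w
    simp only [mem_ofPred_eq, mem_ball_zero_iff, norm_smul, he, mul_one]
  have hsub {t : ℝ} (ht : t ≤ R) : closedBall (0 : ℂ) t ⊆ ball 0 R₀ :=
    closedBall_subset_ball (ht.trans_lt hRR₀)
  have hmem {w : ℂ} (hw : w ∈ ball (0 : ℂ) R₀) : w • e ∈ ball (0 : Cn n) R₀ := hslice.ge hw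
  have hG : DifferentiableOn ℂ (fun w : ℂ => g (w • e)) (ball 0 R₀) :=
    hg.comp (differentiable_id.smul_const e).differentiableOn fun w hw => hmem hw
  have hv : SubharmonicOn (fun w => φ (g (w • e))) (ball 0 R₀) := hslice ▸
    hφ.subharmonicOn_comp_smul (fun x hx => (hφ0 x hx).trans_lt EReal.zero_lt_top) isOpen_ball hg
      hinj hgD (norm_ne_zero_iff.1 (he ▸ one_ne_zero))
  have hE : {w : ℂ | ‖w‖ ∈ Icc r s ∧ ρ ≤ dist (g (w • e)) p} ⊆ ball 0 R₀ := fun w hw =>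
    hsub hsR.le (mem_closedBall_zero_iff.2 hw.1.2)
  have hcircle : ∀ t ∈ Icc r s, ∃ w ∈ {w : ℂ | ‖w‖ ∈ Icc r s ∧ ρ ≤ dist (g (w • e)) p},
      ‖w‖ = t := by
    intro t ht
    have hyt : (‖y‖ : ℂ) ∈ ball (0 : ℂ) t := by simpa using hyr.trans_le ht.1
    obtain ⟨w, rfl, hle⟩ := exists_norm_eq_dist_le (hr.trans_le ht.1).ne'
      (hG.diffContOnCl_ball (hsub (ht.2.trans hsR.le))) hyt p
    exact ⟨w, ⟨ht, hyp.trans (by rwa [hye] at hle)⟩, rfl⟩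
  have hest₀ := hest isOpen_ball hv (hsub le_rfl)
    (fun w hw => hφ0 _ (hgD (hmem (hsub le_rfl (sphere_subset_closedBall hw)))))
    (isCompact_annulus_le_dist (hG.continuousOn.mono (hsub hsR.le))) hE
    (fun w hw => hφc _ (hgD (hmem (hE hw))) hw.2) hcircle
  simpa only [zero_smul] using hest₀

theorem exists_forall_dist_lt {r R c : ℝ} (hr : 0 < r) (hrR : r < R) (hc : 0 < c) :
    ∃ δ > 0, ∀ {D : Set (Cn n)} {f : Cn n → Cn n} {φ : Cn n → EReal} {p z : Cn n} {ρ : ℝ},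
      IsOpen D → DifferentiableOn ℂ f D → InjOn f D → ball 0 R ⊆ f '' D → PSHOn φ D →
      (∀ x ∈ D, φ x ≤ 0) → (∀ x ∈ D, ρ ≤ dist x p → φ x < (-c : ℝ)) → z ∈ D → f z = 0 →
      (-δ : ℝ) < φ z → ∀ x ∈ D, ‖f x‖ < r → dist x p < ρ := by
  obtain ⟨s, hrs, hsR⟩ := exists_between hrR
  obtain ⟨R', hsR', hR'R⟩ := exists_between hsR
  obtain ⟨δ, hδ, hest⟩ := exists_forall_apply_zero_le (n := n) hr hrs hsR' hc
  refine ⟨min δ c, lt_min hδ hc, ?_⟩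
  intro D f φ p z ρ hD hf hinj hball hφ hφ0 hφc hz hfz hφz x hx hfx
  by_contra! hxp
  have hinv {a : Cn n} (ha : a ∈ D) : Function.invFunOn f D (f a) = a :=
    hinj (Function.invFunOn_apply_mem ha) ha (Function.invFunOn_apply_eq ha)
  have hfx0 : f x ≠ 0 := fun h0 =>
    have hxz : x = z := hinj hx hz (h0.trans hfz.symm)
    (hφc x hx hxp).not_gt (lt_of_le_of_lt
      (EReal.coe_le_coe_iff.2 (neg_le_neg (min_le_right δ c))) (hxz ▸ hφz))
  have hφ_le := hest hR'R ((differentiableOn_invFunOn_of_injOn hD hf hinj).mono hball)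
    ((Function.invFunOn_injOn_image f D).mono hball)
    (fun y hy => Function.invFunOn_mem (hball hy)) hφ hφ0 hφc hfx0 hfx (by rwa [hinv hx])
  rw [← hfz, hinv hz] at hφ_le
  exact (hφ_le.trans (EReal.coe_le_coe_iff.2 (neg_le_neg (min_le_left δ c)))).not_gt hφz

end Localization

section Squeezing

variable {n : ℕ} {D U : Set (Cn n)} {p z : Cn n} {φ : Cn n → EReal}

lemma le_one_of_ball_subset_image [Nontrivial (Cn n)] {f : Cn n → Cn n} {r : ℝ}
    (hmaps : MapsTo f D (ball 0 1)) (hball : ball 0 r ⊆ f '' D) : r ≤ 1 := by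
  obtain ⟨e, he⟩ := exists_norm_eq (Cn n) zero_le_one
  by_contra! hr
  have he_mem : e ∈ ball (0 : Cn n) 1 :=
    hmaps.image_subset (hball (mem_ball_zero_iff.2 (he.trans_lt hr)))
  exact (mem_ball_zero_iff.1 he_mem).ne he

lemma squeezing_le_one [Nontrivial (Cn n)] : squeezing D z ≤ 1 :=
  Real.sSup_le (fun _ ⟨_, _, _, _, hmaps, _, hball⟩ => le_one_of_ball_subset_image hmaps hball)
    zero_le_one

lemma le_squeezing [Nontrivial (Cn n)] {f : Cn n → Cn n} {r : ℝ} (hr : 0 < r)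
    (hf : DifferentiableOn ℂ f D) (hinj : InjOn f D) (hmaps : MapsTo f D (ball 0 1))
    (hfz : f z = 0) (hball : ball 0 r ⊆ f '' D) : r ≤ squeezing D z :=
  le_csSup ⟨1, fun _ ⟨_, _, _, _, hmaps', _, hball'⟩ => le_one_of_ball_subset_image hmaps' hball'⟩
    ⟨hr, f, hf, hinj, hmaps, hfz, hball⟩

lemma exists_of_lt_squeezing {a : ℝ} (ha : 0 ≤ a) (h : a < squeezing D z) :
    ∃ f : Cn n → Cn n, DifferentiableOn ℂ f D ∧ InjOn f D ∧ MapsTo f D (ball 0 1) ∧ f z = 0 ∧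
      ball 0 a ⊆ f '' D := by
  obtain ⟨r, ⟨-, f, hf, hinj, hmaps, hfz, hball⟩, har⟩ := exists_lt_of_lt_csSup
    (nonempty_iff_ne_empty.2 fun hempty => (ha.trans_lt h).ne' <| by
      rw [squeezing, hempty, Real.sSup_empty]) h
  exact ⟨f, hf, hinj, hmaps, hfz, (ball_subset_ball har.le).trans hball⟩

lemma IsPshPeakFn.nonpos (hφ : IsPshPeakFn D p φ) (hpD : p ∉ D) {x : Cn n} (hx : x ∈ D) :
    φ x ≤ 0 := by
  obtain ⟨c, hc, hφc⟩ := hφ.2.2 {x}ᶜ (compl_singleton_mem_nhds (ne_of_mem_of_not_mem hx hpD).symm)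
  exact (hφc x ⟨hx, fun h => h rfl⟩).trans (EReal.coe_nonpos.2 hc.le)

lemma IsPshPeakFn.exists_lt_neg (hφ : IsPshPeakFn D p φ) {ρ : ℝ} (hρ : 0 < ρ) :
    ∃ c > 0, ∀ x ∈ D, ρ ≤ dist x p → φ x < (-c : ℝ) := by
  obtain ⟨c, hc, hφc⟩ := hφ.2.2 (ball p ρ) (ball_mem_nhds p hρ)
  exact ⟨-c / 2, by linarith, fun x hx hxp => (hφc x ⟨hx, not_lt.2 hxp⟩).trans_lt
    (EReal.coe_lt_coe_iff.2 (by linarith))⟩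

theorem IsPshPeakFn.eventually_le_squeezing_inter (hφ : IsPshPeakFn D p φ) (hD : IsOpen D)
    (hpD : p ∉ D) (hU : U ∈ 𝓝 p) {r R : ℝ} (hr : 0 < r) (hrR : r < R)
    (hR : ∀ᶠ z in 𝓝[D] p, R < squeezing D z) :
    ∀ᶠ z in 𝓝[D] p, r ≤ squeezing (D ∩ U) z := by
  obtain ⟨ρ, hρ, hρU⟩ := Metric.mem_nhds_iff.1 hU
  obtain ⟨c, hc, hφc⟩ := hφ.exists_lt_neg hρ
  obtain ⟨δ, hδ, hnear⟩ := exists_forall_dist_lt (n := n) hr hrR hc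
  have hφδ : ∀ᶠ z in 𝓝[D] p, (-δ : ℝ) < φ z :=
    hφ.2.1.eventually (lt_mem_nhds (EReal.coe_lt_coe_iff.2 (neg_lt_zero.2 hδ)))
  filter_upwards [hR, hφδ, self_mem_nhdsWithin] with z hRz hφz hz
  obtain ⟨f, hf, hinj, hmaps, hfz, hball⟩ := exists_of_lt_squeezing (hr.trans hrR).le hRz
  have : Nontrivial (Cn n) := nontrivial_of_ne z p (ne_of_mem_of_not_mem hz hpD)
  refine le_squeezing hr (hf.mono inter_subset_left) (hinj.mono inter_subset_left)
    (hmaps.mono_left inter_subset_left) hfz fun y hy => ?_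
  obtain ⟨x, hx, rfl⟩ := hball (ball_subset_ball hrR.le hy)
  exact ⟨x, ⟨hx, hρU (hnear hD hf hinj hball hφ.1 (fun _ => hφ.nonpos hpD) hφc hz hfz hφz x hx
    (mem_ball_zero_iff.1 hy))⟩, rfl⟩

theorem squeezing_tendsto_one_localization_general (hD : IsOpen D) (hp : p ∈ frontier D)
    (hφ : IsPshPeakFn D p φ) (hU : U ∈ 𝓝 p) (hlim : Tendsto (squeezing D) (𝓝[D] p) (𝓝 1)) :
    Tendsto (squeezing (D ∩ U)) (𝓝[D] p) (𝓝 1) := by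
  have hpD : p ∉ D := (hD.frontier_eq ▸ hp).2
  obtain ⟨x, hx⟩ := closure_nonempty_iff.1 ⟨p, frontier_subset_closure hp⟩
  have : Nontrivial (Cn n) := nontrivial_of_ne x p (ne_of_mem_of_not_mem hx hpD)
  refine tendsto_order.2 ⟨fun a ha => ?_, fun a ha => .of_forall fun z =>
    squeezing_le_one.trans_lt ha⟩
  obtain ⟨r, har, hr⟩ := exists_between (max_lt ha zero_lt_one)
  obtain ⟨R, hrR, hR⟩ := exists_between hr
  exact (hφ.eventually_le_squeezing_inter hD hpD hU ((le_max_right _ _).trans_lt har) hrR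
    (hlim.eventually (lt_mem_nhds hR))).mono fun z => ((le_max_left _ _).trans_lt har).trans_le

end Squeezing

/-- Near a psh peak boundary point, if the squeezing function of `D`
tends to `1`, then so does the squeezing function of `D ∩ U`. -/
theorem squeezing_tendsto_one_localization {n : ℕ} (D : Set (Cn n)) (hD : IsOpen D)
    (hDconn : IsConnected D) (p : Cn n) (hp : p ∈ frontier D)
    (hφ : ∃ φ : Cn n → EReal, IsPshPeakFn D p φ)
    (U : Set (Cn n)) (hU : IsOpen U) (hUb : Bornology.IsBounded U) (hpU : p ∈ U)
    (hlim : Tendsto (squeezing D) (𝓝[D] p) (𝓝 1)) :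
    Tendsto (squeezing (D ∩ U)) (𝓝[D] p) (𝓝 1) :=
  hφ.elim fun _ hφ => squeezing_tendsto_one_localization_general hD hp hφ (hU.mem_nhds hpU) hlim
end
end
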